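/- Let L1 and L2 be propositional bimodal logics with operators □_1, □_E and □_2, □_E respectively, each containing the S5 axioms for the shared □_E and each admitting E-homogeneous models. For every formula φ of the combined language and each i ∈ {1,2} with adp(φ) = adp^i(φ), the following are equivalent: (i) ⊬_{L1 ⊗_E L2} φ; (ii) there is a model based on a frame for L1 ⊗_E L2 in which φ fails at some world; (iii) ⊬_{L_i} □_{i,E}^{≤ md^i(φ)} (Q̂_i(φ))^i → φ^i, where Q_i(φ) is the set of all Θ^i(φ)-quasistates q such that ⊬_{L1 ⊗_E L2} ¬q̂. -/

import Mathlib

namespace PropML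

/-- propositional modal formulas over modal signature `M` -/
inductive PF (M : Type) : Type
  | atom : ℕ → PF M
  | neg : PF M → PF M
  | and : PF M → PF M → PF M
  | box : M → PF M → PF M
  deriving DecidableEq

namespace PF

variable {M M' : Type}

def imp (φ ψ : PF M) : PF M := .neg (.and φ (.neg ψ))

def or (φ ψ : PF M) : PF M := .neg (.and (.neg φ) (.neg ψ))

def dia (m : M) (φ : PF M) : PF M := .neg (.box m (.neg φ))

/-- `⊥` -/
def bot : PF M := .and (.atom 0) (.neg (.atom 0))

/-- renaming of modal operators -/
def mapOp (f : M → M') : PF M → PF M'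
  | atom n => atom n
  | neg φ => neg (mapOp f φ)
  | and φ ψ => and (mapOp f φ) (mapOp f ψ)
  | box m φ => box (f m) (mapOp f φ)

/-- uniform substitution -/
def substP (σ : ℕ → PF M) : PF M → PF M
  | atom n => σ n
  | neg φ => neg (substP σ φ)
  | and φ ψ => and (substP σ φ) (substP σ ψ)
  | box m φ => box m (substP σ φ)

end PF

/-- evaluation treating atoms and boxed formulas as atomic; used to define
the classical tautologies of the modal language -/
def tautEval {M : Type} (v : PF M → Prop) : PF M → Prop
  | .atom n => v (.atom n)
  | .neg φ => ¬ tautEval v φ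
  | .and φ ψ => tautEval v φ ∧ tautEval v ψ
  | .box m φ => v (.box m φ)

/-- classical tautologies of the propositional modal language -/
def IsTaut {M : Type} (φ : PF M) : Prop := ∀ v, tautEval v φ

/-- a (normal) propositional modal `M`-logic -/
structure IsPLogic {M : Type} (L : Set (PF M)) : Prop where
  taut : ∀ φ, IsTaut φ → φ ∈ L
  kax : ∀ (m : M) (n k : ℕ),
    PF.imp (.box m (PF.imp (.atom n) (.atom k)))
      (PF.imp (.box m (.atom n)) (.box m (.atom k))) ∈ L
  mp : ∀ φ ψ, PF.imp φ ψ ∈ L → φ ∈ L → ψ ∈ L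
  nec : ∀ m φ, φ ∈ L → PF.box m φ ∈ L
  subst : ∀ (σ : ℕ → PF M) φ, φ ∈ L → PF.substP σ φ ∈ L

/-- A Kripke `M`-frame. -/
structure KFrame (M : Type) where
  W : Type
  ne : Nonempty W
  R : M → W → W → Prop

/-- truth of a propositional formula in a Kripke model `(F, V)` -/
def PVal {M : Type} {F : KFrame M} (V : ℕ → F.W → Prop) : PF M → F.W → Prop
  | .atom n, w => V n w
  | .neg φ, w => ¬ PVal V φ w
  | .and φ ψ, w => PVal V φ w ∧ PVal V ψ w
  | .box m φ, w => ∀ v, F.R m w v → PVal V φ v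

/-- validity of a propositional formula on a frame -/
def PValid {M : Type} (F : KFrame M) (φ : PF M) : Prop :=
  ∀ (V : ℕ → F.W → Prop) (w : F.W), PVal (F := F) V φ w

/-- `F` is a frame for the logic `L` -/
def FrameFor {M : Type} (F : KFrame M) (L : Set (PF M)) : Prop :=
  ∀ φ ∈ L, PValid F φ

/-- `L` is Kripke complete -/
def KComplete {M : Type} (L : Set (PF M)) : Prop :=
  ∀ φ, (∀ F : KFrame M, FrameFor F L → PValid F φ) → φ ∈ L

/-- global consequence `φ ⊢*_L ψ`: `ψ` is in the smallest set including
`L ∪ {φ}` closed under Modus Ponens and Necessitation -/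
inductive PGlobal {M : Type} (L : Set (PF M)) (φ : PF M) : PF M → Prop
  | ax {ψ} : ψ ∈ L → PGlobal L φ ψ
  | prem : PGlobal L φ φ
  | mp {ψ χ} : PGlobal L φ (PF.imp ψ χ) → PGlobal L φ ψ → PGlobal L φ χ
  | nec (m : M) {ψ} : PGlobal L φ ψ → PGlobal L φ (PF.box m ψ)

/-- `L` is globally Kripke complete -/
def GloballyKComplete {M : Type} (L : Set (PF M)) : Prop :=
  ∀ φ ψ, PGlobal L φ ψ ↔
    ∀ F : KFrame M, FrameFor F L → ∀ V : ℕ → F.W → Prop,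
      (∀ w, PVal (F := F) V φ w) → ∀ w, PVal (F := F) V ψ w

/-- the S5 axioms for the operator `e` -/
def ContainsS5 {M : Type} (L : Set (PF M)) (e : M) : Prop :=
  PF.imp (.box e (.atom 0)) (.atom 0) ∈ L ∧
  PF.imp (.box e (.atom 0)) (.box e (.box e (.atom 0))) ∈ L ∧
  PF.imp (PF.dia e (.atom 0)) (.box e (PF.dia e (.atom 0))) ∈ L

/-- an `(E, κ)`-homogeneous model: in each `E`-equivalence class, each formula
is satisfied either nowhere or at exactly `κ` worlds -/
def EHomog {M : Type} {F : KFrame M} (e : M) (V : ℕ → F.W → Prop)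
    (κ : Cardinal) : Prop :=
  ∀ (w : F.W) (φ : PF M),
    Cardinal.mk {v : F.W // F.R e w v ∧ PVal (F := F) V φ v} = 0 ∨
    Cardinal.mk {v : F.W // F.R e w v ∧ PVal (F := F) V φ v} = κ

/-- `L` admits `E`-homogeneous models -/
def AdmitsEHomog {M : Type} (e : M) (L : Set (PF M)) : Prop :=
  ∃ κ : Cardinal, Cardinal.aleph0 ≤ κ ∧ ∀ κ', κ ≤ κ' → ∀ φ ∉ L,
    ∃ F : KFrame M, FrameFor F L ∧ ∃ V : ℕ → F.W → Prop,
      EHomog e V κ' ∧ ∃ w, ¬ PVal (F := F) V φ w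

/-- `L` admits `E`-homogeneous models for global consequence -/
def AdmitsEHomogGlobal {M : Type} (e : M) (L : Set (PF M)) : Prop :=
  ∃ κ : Cardinal, Cardinal.aleph0 ≤ κ ∧ ∀ κ', κ ≤ κ' → ∀ φ ψ, ¬ PGlobal L φ ψ →
    ∃ F : KFrame M, FrameFor F L ∧ ∃ V : ℕ → F.W → Prop,
      EHomog e V κ' ∧ (∀ w, PVal (F := F) V φ w) ∧ ∃ w, ¬ PVal (F := F) V ψ w

/-- the fusion `L1 ⊗_E L2` of two logics sharing the S5 operator `□_E`
(designated by `none` in each component signature): the smallest propositional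
modal logic in the combined language (with the single shared `□_E`) including
`L1 ∪ L2` -/
def fusionE {M1 M2 : Type} (L1 : Set (PF (Option M1))) (L2 : Set (PF (Option M2))) :
    Set (PF (Option (M1 ⊕ M2))) :=
  ⋂₀ {L | IsPLogic L ∧
    PF.mapOp (Option.map Sum.inl) '' L1 ⊆ L ∧
    PF.mapOp (Option.map Sum.inr) '' L2 ⊆ L}

/-- the propositional modal logic `S5` (of the single operator `□_E`) -/
def S5L : Set (PF Unit) := ⋂₀ {L | IsPLogic L ∧ ContainsS5 L ()}

/-- the left commutativity axiom `□□_E p → □_E □ p` -/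
def lcom {M : Type} (m : M) : PF (Option M) :=
  PF.imp (.box (some m) (.box none (.atom 0))) (.box none (.box (some m) (.atom 0)))

/-- the right commutativity axiom `□_E □ p → □ □_E p` -/
def rcom {M : Type} (m : M) : PF (Option M) :=
  PF.imp (.box none (.box (some m) (.atom 0))) (.box (some m) (.box none (.atom 0)))

/-- the semicommutator `[L, S5]^xd = L ⊗ S5 + {lcom_□ : □ ∈ M}`
(`□_E` is `none`) -/
def LS5xd {M : Type} (L : Set (PF M)) : Set (PF (Option M)) :=
  ⋂₀ {L' | IsPLogic L' ∧
    PF.mapOp Option.some '' L ⊆ L' ∧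
    PF.mapOp (fun _ => (none : Option M)) '' S5L ⊆ L' ∧
    ∀ m : M, lcom m ∈ L'}

/-- the commutator `[L, S5]^cd = [L, S5]^xd + {rcom_□ : □ ∈ M}` -/
def LS5cd {M : Type} (L : Set (PF M)) : Set (PF (Option M)) :=
  ⋂₀ {L' | IsPLogic L' ∧ LS5xd L ⊆ L' ∧ ∀ m : M, rcom m ∈ L'}

/-- the two domain semantics: expanding (`xd`) and constant (`cd`) domains -/
inductive DSem : Type
  | xd | cd
  deriving DecidableEq

/-- `[L, S5]^d` -/
def LS5 {M : Type} (d : DSem) (L : Set (PF M)) : Set (PF (Option M)) :=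
  match d with
  | .xd => LS5xd L
  | .cd => LS5cd L

/-- the fixed Gödel numbering of propositional formulas (relative to a
numbering `eM` of the modal operators) -/
def PF.encode {M : Type} (eM : M → ℕ) : PF M → ℕ
  | .atom n => Nat.pair 0 n
  | .neg φ => Nat.pair 1 (PF.encode eM φ)
  | .and φ ψ => Nat.pair 2 (Nat.pair (PF.encode eM φ) (PF.encode eM ψ))
  | .box m φ => Nat.pair 3 (Nat.pair (eM m) (PF.encode eM φ))

/-- decidability of a propositional logic w.r.t. the fixed Gödel numbering -/
def DecidableP {M : Type} (eM : M → ℕ) (L : Set (PF M)) : Prop :=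
  ComputablePred (fun n : ℕ => ∃ φ ∈ L, PF.encode eM φ = n)

/-- decidability of the global consequence relation -/
def GloballyDecidableP {M : Type} (eM : M → ℕ) (L : Set (PF M)) : Prop :=
  ComputablePred (fun p : ℕ × ℕ =>
    ∃ φ ψ, PGlobal L φ ψ ∧ PF.encode eM φ = p.1 ∧ PF.encode eM ψ = p.2)

end PropML

namespace PropML

/-- the component signature: `some ()` is the proper operator, `none` is `□_E` -/
abbrev OU : Type := Option Unit

/-- the combined signature: `some (Sum.inl ())` is `□₁`, `some (Sum.inr ())`
is `□₂`, and `none` is the shared `□_E` -/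
abbrev OC : Type := Option (Unit ⊕ Unit)

namespace PF

variable {M : Type}

/-- the set of subformulas -/
def sub [DecidableEq M] : PF M → Finset (PF M)
  | atom n => {atom n}
  | neg φ => insert (neg φ) φ.sub
  | and φ ψ => insert (and φ ψ) (φ.sub ∪ ψ.sub)
  | box m φ => insert (box m φ) φ.sub

/-- indices of the proposition letters occurring in a formula -/
def atoms : PF M → Finset ℕ
  | atom n => {n}
  | neg φ => φ.atoms
  | and φ ψ => φ.atoms ∪ ψ.atoms
  | box _ φ => φ.atoms

end PF

/-- finite conjunction (`⊤` for the empty list) -/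
def bigAndP {M : Type} : List (PF M) → PF M
  | [] => PF.imp (.atom 0) (.atom 0)
  | φ :: l => List.foldl PF.and φ l

/-- finite disjunction -/
def bigOrP {M : Type} (l : List (PF M)) : PF M := PF.neg (bigAndP (l.map PF.neg))

/-- a `Φ`-type: a maximal Boolean-consistent subset of `{ψ, ¬ψ ∣ ψ ∈ Φ}` -/
def IsTypeP {M : Type} [DecidableEq M] (Φ t : Finset (PF M)) : Prop :=
  (∀ χ ∈ t, χ ∈ Φ ∨ ∃ ψ ∈ Φ, χ = PF.neg ψ) ∧
  (∀ ψ ∈ Φ, (PF.neg ψ ∈ t ↔ ψ ∉ t)) ∧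
  (∀ ψ₁ ψ₂, PF.and ψ₁ ψ₂ ∈ Φ → (PF.and ψ₁ ψ₂ ∈ t ↔ ψ₁ ∈ t ∧ ψ₂ ∈ t))

/-- a `Φ`-quasistate: a non-empty set of `Φ`-types saturated for `◇_E` -/
def IsQuasistateP {M : Type} [DecidableEq M] (eOp : M) (Φ : Finset (PF M))
    (q : Finset (Finset (PF M))) : Prop :=
  q.Nonempty ∧ (∀ t ∈ q, IsTypeP Φ t) ∧
  ∀ ψ, PF.box eOp (PF.neg ψ) ∈ Φ → ∀ t ∈ q,
    (PF.neg (PF.box eOp (PF.neg ψ)) ∈ t ↔ ∃ t' ∈ q, ψ ∈ t')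

/-- the conjunction of the formulas in the type `t` -/
noncomputable def typeConjP {M : Type} (t : Finset (PF M)) : PF M := bigAndP t.toList

/-- the realisability formula `q̂ = □_E ⋁_{t∈q} t ∧ ⋀_{t∈q} ◇_E t` -/
noncomputable def qhatP {M : Type} (eOp : M) (q : Finset (Finset (PF M))) : PF M :=
  PF.and (PF.box eOp (bigOrP (q.toList.map typeConjP)))
    (bigAndP (q.toList.map (fun t => PF.dia eOp (typeConjP t))))

/-- `Q̂ = ⋁_{q ∈ Q} q̂` -/
noncomputable def QhatP {M : Type} (eOp : M) (Q : Finset (Finset (Finset (PF M)))) :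
    PF M :=
  bigOrP (Q.toList.map (qhatP eOp))

/-- the surrogate translation `·¹` into the language of the first component:
maximal subformulas `□₂ψ` are replaced by the fresh surrogate letter given
by `s` -/
def sur1P (s : PF OC → ℕ) : PF OC → PF OU
  | .atom n => .atom n
  | .neg φ => .neg (sur1P s φ)
  | .and φ ψ => .and (sur1P s φ) (sur1P s ψ)
  | .box none φ => .box none (sur1P s φ)
  | .box (some (Sum.inl _)) φ => .box (some ()) (sur1P s φ)
  | .box (some (Sum.inr _)) φ => .atom (s (.box (some (Sum.inr ())) φ))

/-- the surrogate translation `·²` into the language of the second component -/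
def sur2P (s : PF OC → ℕ) : PF OC → PF OU
  | .atom n => .atom n
  | .neg φ => .neg (sur2P s φ)
  | .and φ ψ => .and (sur2P s φ) (sur2P s ψ)
  | .box none φ => .box none (sur2P s φ)
  | .box (some (Sum.inr _)) φ => .box (some ()) (sur2P s φ)
  | .box (some (Sum.inl _)) φ => .atom (s (.box (some (Sum.inl ())) φ))

/-- `Θ¹(φ)`: the proposition letters of `φ` together with all subformulas of
`□₂`-subformulas -/
def Theta1P (φ : PF OC) : Finset (PF OC) :=
  φ.sub.filter (fun χ => (match χ with | .atom _ => true | _ => false) = true) ∪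
  (φ.sub.filter
    (fun χ => (match χ with | .box (some (Sum.inr _)) _ => true | _ => false) = true)).biUnion
    PF.sub

/-- `Θ²(φ)` -/
def Theta2P (φ : PF OC) : Finset (PF OC) :=
  φ.sub.filter (fun χ => (match χ with | .atom _ => true | _ => false) = true) ∪
  (φ.sub.filter
    (fun χ => (match χ with | .box (some (Sum.inl _)) _ => true | _ => false) = true)).biUnion
    PF.sub

/-- the modal `1`-depth: maximal nesting of `□₁`, ignoring `□₂` and `□_E` -/
def md1P : PF OC → ℕ
  | .atom _ => 0
  | .neg φ => md1P φ
  | .and φ ψ => max (md1P φ) (md1P ψ)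
  | .box none φ => md1P φ
  | .box (some (Sum.inl _)) φ => md1P φ + 1
  | .box (some (Sum.inr _)) φ => md1P φ

/-- the modal `2`-depth -/
def md2P : PF OC → ℕ
  | .atom _ => 0
  | .neg φ => md2P φ
  | .and φ ψ => max (md2P φ) (md2P ψ)
  | .box none φ => md2P φ
  | .box (some (Sum.inl _)) φ => md2P φ
  | .box (some (Sum.inr _)) φ => md2P φ + 1

/-- the pair `(adp¹(φ), adp²(φ))` of alternation depths: `adp¹(φ)` is the
least number of alternating applications of the restoring operations
`·⁻¹, ·⁻², …` needed to recover `φ` from `φ¹`, i.e. the maximal number of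
alternations between `□₁` and `□₂` in `φ` starting from `□₁`; symmetrically
for `adp²`. -/
def adpPairP : PF OC → ℕ × ℕ
  | .atom _ => (0, 0)
  | .neg φ => adpPairP φ
  | .and φ ψ => (max (adpPairP φ).1 (adpPairP ψ).1, max (adpPairP φ).2 (adpPairP ψ).2)
  | .box none φ => adpPairP φ
  | .box (some (Sum.inl _)) φ => ((adpPairP φ).1, (adpPairP φ).1 + 1)
  | .box (some (Sum.inr _)) φ => ((adpPairP φ).2 + 1, (adpPairP φ).2)

/-- `adp¹(φ)` -/
def adp1P (φ : PF OC) : ℕ := (adpPairP φ).1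

/-- `adp²(φ)` -/
def adp2P (φ : PF OC) : ℕ := (adpPairP φ).2

/-- `adp(φ) = min (adp¹(φ), adp²(φ))` -/
def adpP (φ : PF OC) : ℕ := min (adp1P φ) (adp2P φ)

/-- `□_{i,E}^m χ`, in the component language: `□_{i,E}^{m+1} χ =
□_E □_i □_E □_{i,E}^m χ` -/
def boxIE : ℕ → PF OU → PF OU
  | 0, χ => χ
  | n + 1, χ => .box none (.box (some ()) (.box none (boxIE n χ)))

/-- `□_{i,E}^{≤m} χ = χ ∧ □_{i,E}^1 χ ∧ … ∧ □_{i,E}^m χ` -/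
def boxIELe : ℕ → PF OU → PF OU
  | 0, χ => χ
  | n + 1, χ => .and (boxIELe n χ) (boxIE (n + 1) χ)

open Classical in
/-- `Q₁(φ)`: all `Θ¹(φ)`-quasistates `q` with `⊬_L ¬q̂` (for `L = L1 ⊗_E L2`) -/
noncomputable def Qset1P (L : Set (PF OC)) (φ : PF OC) :
    Finset (Finset (Finset (PF OC))) :=
  ((Theta1P φ ∪ (Theta1P φ).image PF.neg).powerset.powerset).filter
    (fun q => IsQuasistateP none (Theta1P φ) q ∧ PF.neg (qhatP none q) ∉ L)

open Classical in
/-- `Q₂(φ)` -/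
noncomputable def Qset2P (L : Set (PF OC)) (φ : PF OC) :
    Finset (Finset (Finset (PF OC))) :=
  ((Theta2P φ ∪ (Theta2P φ).image PF.neg).powerset.powerset).filter
    (fun q => IsQuasistateP none (Theta2P φ) q ∧ PF.neg (qhatP none q) ∉ L)

end PropML

/-!
If `φⁱ` is derivable in `Lᵢ` from the boxed surrogate of `Q̂`, then restoring the surrogates turns
the derivation into one in the fusion, because the fusion proves `Q̂`: every maximal consistent set
realises some quasistate, and that quasistate is then consistent with the fusion.

Otherwise the formulas underivable in the two components are refuted in homogeneous models, and the
disjoint union of these models is a universal model of each component. By homogeneity each type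
realised in an `E`-class is realised by exactly `κ` of its worlds, so any two classes of the two
components with the same quasistate can be identified world by world; after taking enough copies of
both models, this glues them to a model on a frame for the fusion. Surrogates there agree with the
formulas they stand for only as long as the worlds passed on the way realise admissible
quasistates. The classes are therefore labelled with the number of steps for which this is still
guaranteed in each component, and only equally labelled classes are identified; a world refuting
`φⁱ` needs no more than `mdⁱ(φ)` steps of component `i`.
-/

namespace PropML

section Semantics

variable {M M' : Type} {F G : KFrame M}

lemma tautEval_pVal (V : ℕ → F.W → Prop) (w : F.W) (φ : PF M) :
    tautEval (fun χ => PVal V χ w) φ ↔ PVal V φ w := by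
  induction φ with
  | atom n => rfl
  | neg φ ih => simp only [tautEval, PVal, ih]
  | and φ ψ ihφ ihψ => simp only [tautEval, PVal, ihφ, ihψ]
  | box m φ => rfl

lemma pVal_imp (V : ℕ → F.W → Prop) (φ ψ : PF M) (w : F.W) :
    PVal V (PF.imp φ ψ) w ↔ (PVal V φ w → PVal V ψ w) := by
  simp [PF.imp, PVal]

lemma pVal_substP (V : ℕ → F.W → Prop) (σ : ℕ → PF M) (φ : PF M) (w : F.W) :
    PVal V (PF.substP σ φ) w ↔ PVal (fun n v => PVal V (σ n) v) φ w := by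
  induction φ generalizing w with
  | atom n => rfl
  | neg φ ih => simp only [PF.substP, PVal, ih]
  | and φ ψ ihφ ihψ => simp only [PF.substP, PVal, ihφ, ihψ]
  | box m φ ih => simp only [PF.substP, PVal, ih]

/-- The reduct of an `M'`-frame along a map of signatures `f : M → M'`. -/
def KFrame.reduct (f : M → M') (F : KFrame M') : KFrame M :=
  ⟨F.W, F.ne, fun m => F.R (f m)⟩

lemma pVal_mapOp (f : M → M') {F : KFrame M'} (V : ℕ → F.W → Prop) (φ : PF M) (w : F.W) :
    PVal V (PF.mapOp f φ) w ↔ PVal (F := F.reduct f) V φ w := by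
  induction φ generalizing w with
  | atom n => rfl
  | neg φ ih => simp only [PF.mapOp, PVal, ih]
  | and φ ψ ihφ ihψ => simp only [PF.mapOp, PVal, ihφ, ihψ]
  | box m φ ih => simp only [PF.mapOp, PVal, ih]; rfl

lemma isPLogic_setOf_pValid (F : KFrame M) : IsPLogic {φ | PValid F φ} where
  taut φ hφ V w := (tautEval_pVal V w φ).1 (hφ _)
  kax m n k V w := by
    simp only [pVal_imp, PVal]
    exact fun hnk hn v hv => hnk v hv (hn v hv)
  mp φ ψ hφψ hφ V w := (pVal_imp V φ ψ w).1 (hφψ V w) (hφ V w)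
  nec m φ hφ V _ v _ := hφ V v
  subst σ φ hφ V w := (pVal_substP V σ φ w).2 (hφ _ w)

lemma IsPLogic.sInter {S : Set (Set (PF M))} (hS : ∀ L ∈ S, IsPLogic L) : IsPLogic (⋂₀ S) where
  taut φ hφ L hL := (hS L hL).taut φ hφ
  kax m n k L hL := (hS L hL).kax m n k
  mp φ ψ hφψ hφ L hL := (hS L hL).mp φ ψ (hφψ L hL) (hφ L hL)
  nec m φ hφ L hL := (hS L hL).nec m φ (hφ L hL)
  subst σ φ hφ L hL := (hS L hL).subst σ φ (hφ L hL)

/-- `f` is a bounded morphism (p-morphism) from `G` to `F`; the forth and back conditions are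
merged into one equivalence. -/
def IsBoundedMorphism (G F : KFrame M) (f : G.W → F.W) : Prop :=
  ∀ m x y, F.R m (f x) y ↔ ∃ z, G.R m x z ∧ f z = y

namespace IsBoundedMorphism

variable {f : G.W → F.W}

lemma forall_iff (hf : IsBoundedMorphism G F f) (m : M) (x : G.W) (P : F.W → Prop) :
    (∀ y, F.R m (f x) y → P y) ↔ ∀ z, G.R m x z → P (f z) := by
  simp only [hf m x]
  exact ⟨fun h z hz => h _ ⟨z, hz, rfl⟩, fun h _ ⟨z, hz, hy⟩ => hy ▸ h z hz⟩

lemma pVal_comp (hf : IsBoundedMorphism G F f) (V : ℕ → F.W → Prop) (χ : PF M) (x : G.W) :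
    PVal (F := G) (fun n z => V n (f z)) χ x ↔ PVal V χ (f x) := by
  induction χ generalizing x with
  | atom n => rfl
  | neg χ ih => simp only [PVal, ih]
  | and χ ψ ihχ ihψ => simp only [PVal, ihχ, ihψ]
  | box m χ ih => simp only [PVal, ih, hf.forall_iff]

lemma mk_sat_eq (hf : IsBoundedMorphism G F f) (hinj : Function.Injective f) (e : M)
    (V : ℕ → F.W → Prop) (χ : PF M) (x : G.W) :
    Cardinal.mk {y // F.R e (f x) y ∧ PVal V χ y} =
      Cardinal.mk {z // G.R e x z ∧ PVal (F := G) (fun n z => V n (f z)) χ z} := by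
  have himage : {y | F.R e (f x) y ∧ PVal V χ y} =
      f '' {z | G.R e x z ∧ PVal (F := G) (fun n z => V n (f z)) χ z} := by
    ext y
    simp only [hf e x, hf.pVal_comp, Set.mem_ofPred_eq, Set.mem_image]
    exact ⟨fun ⟨⟨z, hz, hzy⟩, hy⟩ => ⟨z, ⟨hz, hzy ▸ hy⟩, hzy⟩,
      fun ⟨z, ⟨hz, hχ⟩, hzy⟩ => ⟨⟨z, hz, hzy⟩, hzy ▸ hχ⟩⟩
  exact (congrArg (fun s : Set F.W => Cardinal.mk s) himage).trans (Cardinal.mk_image_eq hinj)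

end IsBoundedMorphism

lemma FrameFor.of_cover {L : Set (PF M)}
    (hF : ∀ x : F.W, ∃ G f y, FrameFor G L ∧ IsBoundedMorphism G F f ∧ f y = x) :
    FrameFor F L := by
  intro φ hφ V x
  obtain ⟨G, f, y, hG, hf, rfl⟩ := hF x
  exact (hf.pVal_comp V φ y).1 (hG φ hφ _ y)

/-- `b` exhibits `G` as a disjoint union of copies of `F` indexed by `I`. -/
def IsDisjointCopies {I : Type} (G F : KFrame M) (b : G.W ≃ F.W × I) : Prop :=
  ∀ m x y, G.R m x y ↔ F.R m (b x).1 (b y).1 ∧ (b x).2 = (b y).2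

namespace IsDisjointCopies

variable {I : Type} {b : G.W ≃ F.W × I}

lemma isBoundedMorphism (hb : IsDisjointCopies G F b) :
    IsBoundedMorphism G F fun x => (b x).1 := fun m x y =>
  ⟨fun h => ⟨b.symm (y, (b x).2), by simp [hb m, h], by simp⟩,
    fun ⟨z, hz, hzy⟩ => hzy ▸ ((hb m x z).1 hz).1⟩

lemma frameFor (hb : IsDisjointCopies G F b) {L : Set (PF M)} (hF : FrameFor F L) :
    FrameFor G L := by
  refine FrameFor.of_cover fun x => ⟨F, fun y => b.symm (y, (b x).2), (b x).1, hF, ?_, by simp⟩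
  intro m y z
  simp only [hb m, Equiv.apply_symm_apply]
  exact ⟨fun h => ⟨(b z).1, h.1, by simp [h.2]⟩, by rintro ⟨y', h, rfl⟩; simpa using h⟩

end IsDisjointCopies

/-- The disjoint union of a family of frames. -/
def KFrame.sigma {ι : Type} [Nonempty ι] (F : ι → KFrame M) : KFrame M where
  W := Σ i, (F i).W
  ne := let ⟨i⟩ := ‹Nonempty ι›; let ⟨w⟩ := (F i).ne; ⟨⟨i, w⟩⟩
  R m x y := ∃ z, (F x.1).R m x.2 z ∧ ⟨x.1, z⟩ = y

lemma isBoundedMorphism_sigmaMk {ι : Type} [Nonempty ι] (F : ι → KFrame M) (i : ι) :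
    IsBoundedMorphism (F i) (KFrame.sigma F) (fun w => ⟨i, w⟩) := fun _ _ _ => Iff.rfl

lemma equivalence_of_refl_of_euclidean {α : Type*} {r : α → α → Prop} (hrefl : ∀ a, r a a)
    (heucl : ∀ a b c, r a b → r a c → r b c) : Equivalence r :=
  have hsymm : ∀ {a b}, r a b → r b a := fun hab => heucl _ _ _ hab (hrefl _)
  ⟨hrefl, hsymm, fun hab hbc => heucl _ _ _ (hsymm hab) hbc⟩

lemma FrameFor.equivalence {L : Set (PF M)} {e : M} (hF : FrameFor F L) (hS : ContainsS5 L e) :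
    Equivalence (F.R e) := by
  refine equivalence_of_refl_of_euclidean (fun a => ?_) fun a b c hab hac => ?_
  · exact (pVal_imp _ _ _ _).1 (hF _ hS.1 (fun _ v => F.R e a v) a) fun _ hv => hv
  · have hdia := (pVal_imp _ _ _ _).1 (hF _ hS.2.2 (fun _ v => v = c) a)
    simp only [PF.dia, PVal, not_forall, not_not] at hdia
    obtain ⟨v, hbv, rfl⟩ := hdia ⟨c, hac, rfl⟩ b hab
    exact hbv

end Semantics

section MaximalConsistentSets

variable {M : Type} {L T U : Set (PF M)} {φ ψ χ : PF M}

/-- `T` is a theory over `L`: it includes `L` and is closed under Modus Ponens (but not necessarily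
under Necessitation). -/
structure IsTheory (L T : Set (PF M)) : Prop where
  subset : L ⊆ T
  mp : ∀ {φ ψ}, PF.imp φ ψ ∈ T → φ ∈ T → ψ ∈ T

/-- `T` is a maximal `L`-consistent set. -/
structure IsMCS (L T : Set (PF M)) : Prop extends IsTheory L T where
  neg_mem_iff : ∀ φ, PF.neg φ ∈ T ↔ φ ∉ T

lemma IsPLogic.isTheory (hL : IsPLogic L) : IsTheory L L :=
  ⟨subset_rfl, hL.mp _ _⟩

namespace IsTheory

lemma mem_of_taut (hT : IsTheory L T) (hL : IsPLogic L) (hφ : φ ∈ T)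
    (h : ∀ v, tautEval v φ → tautEval v ψ) : ψ ∈ T :=
  hT.mp (hT.subset (hL.taut (PF.imp φ ψ) fun v => by simpa [PF.imp, tautEval] using h v)) hφ

lemma mem_of_taut₂ (hT : IsTheory L T) (hL : IsPLogic L) (hφ : φ ∈ T) (hψ : ψ ∈ T)
    (h : ∀ v, tautEval v φ → tautEval v ψ → tautEval v χ) : χ ∈ T :=
  hT.mp (hT.mem_of_taut (ψ := PF.imp ψ χ) hL hφ fun v => by
    simpa [PF.imp, tautEval] using h v) hψ

lemma adjoin (hT : IsTheory L T) (hL : IsPLogic L) (χ : PF M) :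
    IsTheory L {θ | PF.imp χ θ ∈ T} where
  subset θ hθ := hT.mem_of_taut hL (hT.subset hθ) fun v => by
    simp only [PF.imp, tautEval]; tauto
  mp hθξ hθ := hT.mem_of_taut₂ hL hθξ hθ fun v => by
    simp only [PF.imp, tautEval]; tauto

lemma sUnion {c : Set (Set (PF M))} (hc : ∀ T ∈ c, IsTheory L T) (hchain : IsChain (· ⊆ ·) c)
    (hne : c.Nonempty) : IsTheory L (⋃₀ c) where
  subset := let ⟨_, hT⟩ := hne; (hc _ hT).subset.trans (Set.subset_sUnion_of_mem hT)
  mp := by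
    rintro φ ψ ⟨T, hT, hφψ⟩ ⟨U, hU, hφ⟩
    rcases hchain.total hT hU with hTU | hUT
    · exact ⟨U, hU, (hc U hU).mp (hTU hφψ) hφ⟩
    · exact ⟨T, hT, (hc T hT).mp hφψ (hUT hφ)⟩

end IsTheory

lemma IsMCS.of_maximal (hL : IsPLogic L) (hT : Maximal (fun T => IsTheory L T ∧ ψ ∉ T) T) :
    IsMCS L T := by
  obtain ⟨⟨hthy, hψ⟩, hmax⟩ := hT
  have himp : ∀ χ, χ ∉ T → PF.imp χ ψ ∈ T := by
    intro χ hχ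
    by_contra hχψ
    refine hχ (hmax ⟨hthy.adjoin hL χ, hχψ⟩ (fun θ hθ => ?_) (?_ : PF.imp χ χ ∈ T))
    · exact hthy.mem_of_taut hL hθ fun v => by simp only [PF.imp, tautEval]; tauto
    · exact hthy.subset (hL.taut _ fun v => by simp only [PF.imp, tautEval]; tauto)
  refine ⟨hthy, fun χ => ⟨fun hneg hχ => hψ ?_, fun hχ => ?_⟩⟩
  · exact hthy.mem_of_taut₂ hL hneg hχ fun v => by simp only [tautEval]; tauto
  · by_contra hneg
    exact hψ (hthy.mem_of_taut₂ hL (himp _ hχ) (himp _ hneg) fun v => by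
      simp only [PF.imp, tautEval]; tauto)

lemma IsTheory.exists_isMCS (hT : IsTheory L T) (hL : IsPLogic L) (hψ : ψ ∉ T) :
    ∃ U, IsMCS L U ∧ T ⊆ U ∧ ψ ∉ U := by
  obtain ⟨U, hTU, hU⟩ := zorn_subset_nonempty {U | IsTheory L U ∧ ψ ∉ U}
    (fun c hc hchain hne => ⟨⋃₀ c, ⟨.sUnion (fun T hT => (hc hT).1) hchain hne,
      fun ⟨T, hT, hψT⟩ => (hc hT).2 hψT⟩, fun _ => Set.subset_sUnion_of_mem⟩) T ⟨hT, hψ⟩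
  exact ⟨U, .of_maximal hL hU, hTU, hU.prop.2⟩

lemma IsPLogic.mem_iff_forall_isMCS (hL : IsPLogic L) : φ ∈ L ↔ ∀ T, IsMCS L T → φ ∈ T := by
  refine ⟨fun hφ T hT => hT.subset hφ, fun h => ?_⟩
  by_contra hφ
  obtain ⟨T, hT, -, hφT⟩ := hL.isTheory.exists_isMCS hL hφ
  exact hφT (h T hT)

lemma IsPLogic.box_imp_mem (hL : IsPLogic L) (m : M) (φ ψ : PF M) :
    PF.imp (.box m (PF.imp φ ψ)) (PF.imp (.box m φ) (.box m ψ)) ∈ L := by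
  simpa [PF.substP, PF.imp] using hL.subst (fun n => if n = 0 then φ else ψ) _ (hL.kax m 0 1)

/-- The accessibility relation of the canonical frame. -/
def canonicalRel (m : M) (T U : Set (PF M)) : Prop := ∀ χ, PF.box m χ ∈ T → χ ∈ U

namespace IsMCS

lemma and_mem_iff (hT : IsMCS L T) (hL : IsPLogic L) : PF.and φ ψ ∈ T ↔ φ ∈ T ∧ ψ ∈ T :=
  ⟨fun h => ⟨hT.mem_of_taut hL h fun _ hv => hv.1, hT.mem_of_taut hL h fun _ hv => hv.2⟩,
    fun h => hT.mem_of_taut₂ hL h.1 h.2 fun _ hφ hψ => ⟨hφ, hψ⟩⟩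

lemma isTheory_setOf_box_mem (hT : IsMCS L T) (hL : IsPLogic L) (m : M) :
    IsTheory L {χ | PF.box m χ ∈ T} where
  subset χ hχ := hT.subset (hL.nec m χ hχ)
  mp hφψ hφ := hT.mp (hT.mp (hT.subset (hL.box_imp_mem m _ _)) hφψ) hφ

lemma box_mem_iff (hT : IsMCS L T) (hL : IsPLogic L) (m : M) :
    PF.box m φ ∈ T ↔ ∀ U, IsMCS L U → canonicalRel m T U → φ ∈ U := by
  refine ⟨fun hφ U _ hTU => hTU _ hφ, fun h => ?_⟩
  by_contra hφ
  obtain ⟨U, hU, hTU, hφU⟩ := (hT.isTheory_setOf_box_mem hL m).exists_isMCS hL hφ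
  exact hφU (h U hU hTU)

end IsMCS

lemma ContainsS5.equivalence_canonicalRel {e : M} (hS : ContainsS5 L e) (hL : IsPLogic L) :
    Equivalence fun T U : {T // IsMCS L T} => canonicalRel e T.1 U.1 := by
  have hinst : ∀ {α} (θ : PF M) (T : {T // IsMCS L T}), α ∈ L → α.substP (fun _ => θ) ∈ T.1 :=
    fun θ T hα => T.2.subset (hL.subst _ _ hα)
  refine equivalence_of_refl_of_euclidean (fun T θ => T.2.mp (hinst θ T hS.1)) ?_
  intro T U V hTU hTV θ hθ
  by_contra hθV
  have hdia : PF.dia e (.neg θ) ∈ T.1 := (T.2.neg_mem_iff _).2 fun hbox =>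
    (V.2.neg_mem_iff _).1 (hTV _ hbox) ((V.2.neg_mem_iff θ).2 hθV)
  have hdiaU : PF.dia e (.neg θ) ∈ U.1 := hTU _ (T.2.mp (hinst (.neg θ) T hS.2.2) hdia)
  refine (U.2.neg_mem_iff _).1 hdiaU ((U.2.isTheory_setOf_box_mem hL e).mem_of_taut hL hθ ?_)
  exact fun v hv => not_not_intro hv

end MaximalConsistentSets

namespace PF

variable {M : Type} [DecidableEq M]

lemma self_mem_sub (χ : PF M) : χ ∈ χ.sub := by
  cases χ <;> simp [sub]

lemma le_of_mem_sub {α : Type*} [Preorder α] (f : PF M → α) (hneg : ∀ φ, f φ ≤ f (.neg φ))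
    (hand : ∀ φ ψ, f φ ≤ f (.and φ ψ) ∧ f ψ ≤ f (.and φ ψ))
    (hbox : ∀ m φ, f φ ≤ f (.box m φ)) {χ ψ : PF M} (h : χ ∈ ψ.sub) : f χ ≤ f ψ := by
  induction ψ with
  | atom n => simp_all [sub]
  | neg ψ ih =>
    rcases Finset.mem_insert.1 h with rfl | h
    exacts [le_rfl, (ih h).trans (hneg ψ)]
  | and ψ₁ ψ₂ ih₁ ih₂ =>
    simp only [sub, Finset.mem_insert, Finset.mem_union] at h
    rcases h with rfl | h | h
    exacts [le_rfl, (ih₁ h).trans (hand ψ₁ ψ₂).1, (ih₂ h).trans (hand ψ₁ ψ₂).2]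
  | box m ψ ih =>
    rcases Finset.mem_insert.1 h with rfl | h
    exacts [le_rfl, (ih h).trans (hbox m ψ)]

lemma sub_subset_of_mem_sub {χ ψ : PF M} (h : χ ∈ ψ.sub) : χ.sub ⊆ ψ.sub :=
  le_of_mem_sub sub (fun _ => Finset.subset_insert _ _)
    (fun _ _ => ⟨Finset.subset_union_left.trans (Finset.subset_insert _ _),
      Finset.subset_union_right.trans (Finset.subset_insert _ _)⟩)
    (fun _ _ => Finset.subset_insert _ _) h

lemma atoms_subset_of_mem_sub {χ ψ : PF M} (h : χ ∈ ψ.sub) : χ.atoms ⊆ ψ.atoms :=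
  le_of_mem_sub atoms (fun _ => le_rfl)
    (fun _ _ => ⟨Finset.subset_union_left, Finset.subset_union_right⟩) (fun _ _ => le_rfl) h

end PF

section SatisfactionRelations

variable {M : Type} {W : Type*} {e : M} {E : W → W → Prop} {H : PF M → W → Prop}

/-- A satisfaction relation `H` on worlds that treats the connectives classically and `□_e` as the
box of `E`, while the other operators are left uninterpreted. It abstracts from truth in a model,
from truth of surrogates, and from membership in maximal consistent sets. -/
structure IsSatRel (e : M) (E : W → W → Prop) (H : PF M → W → Prop) : Prop where
  neg : ∀ χ w, H (.neg χ) w ↔ ¬ H χ w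
  and : ∀ χ ψ w, H (.and χ ψ) w ↔ H χ w ∧ H ψ w
  box : ∀ χ w, H (.box e χ) w ↔ ∀ v, E w v → H χ v

namespace IsSatRel

lemma foldl_and (hH : IsSatRel e E H) (l : List (PF M)) (φ : PF M) (w : W) :
    H (l.foldl PF.and φ) w ↔ H φ w ∧ ∀ χ ∈ l, H χ w := by
  induction l generalizing φ with
  | nil => simp
  | cons a l ih => simp [ih, hH.and, and_assoc]

lemma bigAndP (hH : IsSatRel e E H) (l : List (PF M)) (w : W) :
    H (bigAndP l) w ↔ ∀ χ ∈ l, H χ w := by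
  cases l with
  | nil => simp [PropML.bigAndP, PF.imp, hH.neg, hH.and]
  | cons a l => simp [PropML.bigAndP, hH.foldl_and]

lemma bigOrP (hH : IsSatRel e E H) (l : List (PF M)) (w : W) :
    H (bigOrP l) w ↔ ∃ χ ∈ l, H χ w := by
  simp [PropML.bigOrP, hH.bigAndP, hH.neg]

lemma dia (hH : IsSatRel e E H) (χ : PF M) (w : W) : H (.dia e χ) w ↔ ∃ v, E w v ∧ H χ v := by
  simp [PF.dia, hH.neg, hH.box]

lemma typeConjP (hH : IsSatRel e E H) (t : Finset (PF M)) (w : W) :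
    H (typeConjP t) w ↔ ∀ χ ∈ t, H χ w := by
  simp [PropML.typeConjP, hH.bigAndP]

lemma qhatP (hH : IsSatRel e E H) (q : Finset (Finset (PF M))) (w : W) :
    H (qhatP e q) w ↔ (∀ v, E w v → ∃ t ∈ q, ∀ χ ∈ t, H χ v) ∧
      ∀ t ∈ q, ∃ v, E w v ∧ ∀ χ ∈ t, H χ v := by
  simp [PropML.qhatP, hH.and, hH.box, hH.bigOrP, hH.bigAndP, hH.dia, hH.typeConjP]

lemma comp {M' : Type} {e' : M'} (hH : IsSatRel e E H) (f : PF M' → PF M)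
    (hneg : ∀ χ, f (.neg χ) = .neg (f χ)) (hand : ∀ χ ψ, f (.and χ ψ) = .and (f χ) (f ψ))
    (hbox : ∀ χ, f (.box e' χ) = .box e (f χ)) : IsSatRel e' E fun χ => H (f χ) where
  neg χ w := by rw [hneg, hH.neg]
  and χ ψ w := by rw [hand, hH.and]
  box χ w := by rw [hbox, hH.box]

lemma pVal {F : KFrame M} (V : ℕ → F.W → Prop) (e : M) : IsSatRel e (F.R e) (PVal (F := F) V) :=
  ⟨fun _ _ => Iff.rfl, fun _ _ _ => Iff.rfl, fun _ _ => Iff.rfl⟩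

lemma canonical {L : Set (PF M)} (hL : IsPLogic L) (e : M) :
    IsSatRel e (fun T U : {T // IsMCS L T} => canonicalRel e T.1 U.1) fun χ T => χ ∈ T.1 where
  neg χ T := T.2.neg_mem_iff χ
  and χ ψ T := T.2.and_mem_iff hL
  box χ T := by simp only [T.2.box_mem_iff hL e, Subtype.forall]

end IsSatRel

end SatisfactionRelations

section Quasistates

variable {M : Type} [DecidableEq M] {W : Type*} {e : M} {E : W → W → Prop}
  {H H' : PF M → W → Prop} {Φ t : Finset (PF M)} {q : Finset (Finset (PF M))}
  {Q : Finset (Finset (Finset (PF M)))} {v w : W}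

/-- `Φ` is closed under subformulas. -/
def IsSubClosed (Φ : Finset (PF M)) : Prop := ∀ χ ∈ Φ, χ.sub ⊆ Φ

/-- The formulas of `Φ` and their negations, the candidates for members of a `Φ`-type. -/
def literals (Φ : Finset (PF M)) : Finset (PF M) := Φ ∪ Φ.image PF.neg

lemma mem_literals {χ : PF M} : χ ∈ literals Φ ↔ χ ∈ Φ ∨ ∃ ψ ∈ Φ, χ = .neg ψ := by
  simp [literals, eq_comm]

open Classical in
/-- The `Φ`-type of a world. -/
noncomputable def worldType (Φ : Finset (PF M)) (H : PF M → W → Prop) (v : W) : Finset (PF M) :=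
  (literals Φ).filter fun χ => H χ v

open Classical in
/-- The `Φ`-quasistate of a world: the set of types realised in its `E`-class. -/
noncomputable def worldQuasistate (Φ : Finset (PF M)) (E : W → W → Prop) (H : PF M → W → Prop)
    (w : W) : Finset (Finset (PF M)) :=
  (literals Φ).powerset.filter fun t => ∃ v, E w v ∧ worldType Φ H v = t

open Classical in
/-- The `Φ`-quasistates whose realisability is consistent with `L`. -/
noncomputable def realisableQuasistates (e : M) (L : Set (PF M)) (Φ : Finset (PF M)) :
    Finset (Finset (Finset (PF M))) :=
  (literals Φ).powerset.powerset.filter fun q => IsQuasistateP e Φ q ∧ PF.neg (qhatP e q) ∉ L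

lemma mem_worldType {χ : PF M} : χ ∈ worldType Φ H v ↔ χ ∈ literals Φ ∧ H χ v := by
  simp [worldType]

lemma mem_worldType_of_mem {χ : PF M} (hχ : χ ∈ Φ) : χ ∈ worldType Φ H v ↔ H χ v :=
  mem_worldType.trans (and_iff_right (mem_literals.2 (.inl hχ)))

lemma mem_worldQuasistate : t ∈ worldQuasistate Φ E H w ↔ ∃ v, E w v ∧ worldType Φ H v = t := by
  simp only [worldQuasistate, Finset.mem_filter, Finset.mem_powerset, and_iff_right_iff_imp]
  rintro ⟨v, -, rfl⟩
  exact fun χ hχ => (mem_worldType.1 hχ).1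

lemma mem_realisableQuasistates {L : Set (PF M)} :
    q ∈ realisableQuasistates e L Φ ↔ IsQuasistateP e Φ q ∧ PF.neg (qhatP e q) ∉ L := by
  simp only [realisableQuasistates, Finset.mem_filter, Finset.mem_powerset, and_iff_right_iff_imp]
  exact fun h t ht => Finset.mem_powerset.2 fun χ hχ => mem_literals.2 ((h.1.2.1 t ht).1 χ hχ)

lemma worldQuasistate_eq_of_rel (hE : Equivalence E) (h : E w v) :
    worldQuasistate Φ E H w = worldQuasistate Φ E H v := by
  ext t
  simp only [mem_worldQuasistate]
  exact ⟨fun ⟨u, hu, ht⟩ => ⟨u, hE.trans (hE.symm h) hu, ht⟩,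
    fun ⟨u, hu, ht⟩ => ⟨u, hE.trans h hu, ht⟩⟩

namespace IsSatRel

lemma worldType_congr (hH : IsSatRel e E H) (hH' : IsSatRel e E H')
    (h : ∀ χ ∈ Φ, ∀ w, H χ w ↔ H' χ w) : worldType Φ H = worldType Φ H' := by
  ext w χ
  simp only [mem_worldType, and_congr_right_iff, mem_literals]
  rintro (hχ | ⟨ψ, hψ, rfl⟩)
  · exact h χ hχ w
  · rw [hH.neg, hH'.neg, h ψ hψ w]

lemma worldQuasistate_congr (hH : IsSatRel e E H) (hH' : IsSatRel e E H')
    (h : ∀ χ ∈ Φ, ∀ w, H χ w ↔ H' χ w) : worldQuasistate Φ E H = worldQuasistate Φ E H' := by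
  ext w t
  simp only [mem_worldQuasistate, hH.worldType_congr hH' h]

lemma worldType_eq_iff (hH : IsSatRel e E H) (ht : IsTypeP Φ t) :
    worldType Φ H v = t ↔ ∀ χ ∈ t, H χ v := by
  refine ⟨fun h χ hχ => (mem_worldType.1 (h ▸ hχ)).2, fun h => Finset.ext fun χ => ?_⟩
  rw [mem_worldType]
  refine ⟨fun ⟨hχ, hv⟩ => ?_, fun hχ => ⟨mem_literals.2 (ht.1 χ hχ), h χ hχ⟩⟩
  rcases mem_literals.1 hχ with hχ | ⟨ψ, hψ, rfl⟩
  · by_contra hχt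
    exact (hH.neg χ v).1 (h _ ((ht.2.1 χ hχ).2 hχt)) hv
  · exact (ht.2.1 ψ hψ).2 fun hψt => (hH.neg ψ v).1 hv (h ψ hψt)

lemma qhatP_iff (hH : IsSatRel e E H) (hq : ∀ t ∈ q, IsTypeP Φ t) :
    H (PropML.qhatP e q) w ↔ worldQuasistate Φ E H w = q := by
  have htype : ∀ t ∈ q, ∀ v, (∀ χ ∈ t, H χ v) ↔ worldType Φ H v = t :=
    fun t ht v => (hH.worldType_eq_iff (hq t ht)).symm
  simp only [hH.qhatP, Finset.ext_iff (s₂ := q), mem_worldQuasistate]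
  constructor
  · rintro ⟨hall, hex⟩ t
    refine ⟨?_, fun ht => ?_⟩
    · rintro ⟨v, hv, rfl⟩
      obtain ⟨t, ht, hvt⟩ := hall v hv
      rwa [(htype t ht v).1 hvt]
    · obtain ⟨v, hv, hvt⟩ := hex t ht
      exact ⟨v, hv, (htype t ht v).1 hvt⟩
  · refine fun h => ⟨fun v hv => ?_, fun t ht => ?_⟩
    · exact ⟨_, (h _).1 ⟨v, hv, rfl⟩, (htype _ ((h _).1 ⟨v, hv, rfl⟩) v).2 rfl⟩
    · obtain ⟨v, hv, hvt⟩ := (h t).2 ht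
      exact ⟨v, hv, (htype t ht v).2 hvt⟩

lemma QhatP_iff (hH : IsSatRel e E H) (hQ : ∀ q ∈ Q, ∀ t ∈ q, IsTypeP Φ t) :
    H (QhatP e Q) w ↔ worldQuasistate Φ E H w ∈ Q := by
  simp only [QhatP, hH.bigOrP, List.mem_map, Finset.mem_toList]
  constructor
  · rintro ⟨_, ⟨q, hq, rfl⟩, h⟩
    rwa [(hH.qhatP_iff (hQ q hq)).1 h]
  · exact fun h => ⟨_, ⟨_, h, rfl⟩, (hH.qhatP_iff (hQ _ h)).2 rfl⟩

lemma isTypeP_worldType (hH : IsSatRel e E H) (hΦ : IsSubClosed Φ) (v : W) :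
    IsTypeP Φ (worldType Φ H v) := by
  refine ⟨fun χ hχ => mem_literals.1 (mem_worldType.1 hχ).1, fun ψ hψ => ?_, fun ψ₁ ψ₂ hψ => ?_⟩
  · rw [mem_worldType_of_mem hψ, mem_worldType, hH.neg]
    exact and_iff_right (mem_literals.2 (.inr ⟨ψ, hψ, rfl⟩))
  · have hsub := hΦ _ hψ
    simp only [PF.sub, Finset.insert_subset_iff, Finset.union_subset_iff] at hsub
    rw [mem_worldType_of_mem hψ, mem_worldType_of_mem (hsub.2.1 ψ₁.self_mem_sub),
      mem_worldType_of_mem (hsub.2.2 ψ₂.self_mem_sub), hH.and]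

lemma isQuasistateP_worldQuasistate (hH : IsSatRel e E H) (hE : Equivalence E)
    (hΦ : IsSubClosed Φ) (w : W) : IsQuasistateP e Φ (worldQuasistate Φ E H w) := by
  refine ⟨⟨_, mem_worldQuasistate.2 ⟨w, hE.refl w, rfl⟩⟩, fun t ht => ?_, fun ψ hψ t ht => ?_⟩
  · obtain ⟨v, -, rfl⟩ := mem_worldQuasistate.1 ht
    exact hH.isTypeP_worldType hΦ v
  · obtain ⟨v, hwv, rfl⟩ := mem_worldQuasistate.1 ht
    have hψΦ : ψ ∈ Φ := hΦ _ hψ (by simp [PF.sub, PF.self_mem_sub])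
    have hdia : H (.neg (.box e (.neg ψ))) v ↔ ∃ u, E v u ∧ H ψ u := hH.dia ψ v
    rw [mem_worldType, hdia, and_iff_right (mem_literals.2 (.inr ⟨_, hψ, rfl⟩))]
    constructor
    · rintro ⟨u, hvu, hu⟩
      exact ⟨_, mem_worldQuasistate.2 ⟨u, hE.trans hwv hvu, rfl⟩, (mem_worldType_of_mem hψΦ).2 hu⟩
    · rintro ⟨t, ht, hψt⟩
      obtain ⟨u, hwu, rfl⟩ := mem_worldQuasistate.1 ht
      exact ⟨u, hE.trans (hE.symm hwv) hwu, (mem_worldType_of_mem hψΦ).1 hψt⟩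

end IsSatRel

end Quasistates

section Components

variable (j : Bool) (s : PF OC → ℕ)

/-- The proper operator `□₁` (`true`) or `□₂` (`false`) of a component. -/
def op : Bool → OC
  | true => some (.inl ())
  | false => some (.inr ())

/-- The inclusion of the signature of a component into the combined signature. -/
def embed : Bool → OU → OC
  | true => Option.map .inl
  | false => Option.map .inr

/-- The surrogate translation `·ʲ`, with `true` for `·¹` and `false` for `·²`. -/
def surrogate : Bool → (PF OC → ℕ) → PF OC → PF OU
  | true => sur1P
  | false => sur2P

/-- The set `Θʲ(φ)`, with `true` for `Θ¹` and `false` for `Θ²`. -/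
def theta : Bool → PF OC → Finset (PF OC)
  | true => Theta1P
  | false => Theta2P

/-- The pair of modal depths of a formula as a function, with `md¹` at `true` and `md²` at
`false`. -/
def modalDepth (φ : PF OC) : Bool → ℕ
  | true => md1P φ
  | false => md2P φ

lemma op_cases (m : OC) : m = none ∨ m = op j ∨ m = op (!j) := by
  rcases m with _ | ⟨⟨⟩⟩ | ⟨⟨⟩⟩ <;> cases j <;> simp [op]

@[simp] lemma embed_none : embed j none = none := by cases j <;> rfl

@[simp] lemma embed_some (u : Unit) : embed j (some u) = op j := by cases j <;> rfl

@[simp] lemma surrogate_atom (n : ℕ) : surrogate j s (.atom n) = .atom n := by cases j <;> rfl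

@[simp] lemma surrogate_neg (χ : PF OC) : surrogate j s (.neg χ) = .neg (surrogate j s χ) := by
  cases j <;> rfl

@[simp] lemma surrogate_and (χ ψ : PF OC) :
    surrogate j s (.and χ ψ) = .and (surrogate j s χ) (surrogate j s ψ) := by
  cases j <;> rfl

@[simp] lemma surrogate_box_none (χ : PF OC) :
    surrogate j s (.box none χ) = .box none (surrogate j s χ) := by
  cases j <;> rfl

@[simp] lemma surrogate_box_op (χ : PF OC) :
    surrogate j s (.box (op j) χ) = .box (some ()) (surrogate j s χ) := by
  cases j <;> rfl

@[simp] lemma surrogate_box_op_not (χ : PF OC) :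
    surrogate j s (.box (op !j) χ) = .atom (s (.box (op !j) χ)) := by
  cases j <;> rfl

lemma modalDepth_box_op (χ : PF OC) :
    modalDepth (.box (op j) χ) = modalDepth χ + Pi.single j 1 := by
  ext k; cases j <;> cases k <;> rfl

lemma modalDepth_le_of_mem_sub {χ ψ : PF OC} (h : χ ∈ ψ.sub) : modalDepth χ ≤ modalDepth ψ := by
  refine PF.le_of_mem_sub modalDepth ?_ ?_ ?_ h
  · exact fun _ k => by cases k <;> rfl
  · exact fun _ _ => ⟨fun k => by cases k <;> simp [modalDepth, md1P, md2P],
      fun k => by cases k <;> simp [modalDepth, md1P, md2P]⟩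
  · rintro (_ | ⟨⟨⟩⟩ | ⟨⟨⟩⟩) φ (_ | _) <;> simp [modalDepth, md1P, md2P]

variable {j} {χ φ : PF OC}

lemma mem_theta : χ ∈ theta j φ ↔
    (χ ∈ φ.sub ∧ ∃ n, χ = .atom n) ∨
      ∃ ψ, .box (op !j) ψ ∈ φ.sub ∧ χ ∈ (PF.box (op !j) ψ).sub := by
  have hatom : ∀ χ : PF OC, (match χ with | .atom _ => true | _ => false) = true ↔
      ∃ n, χ = .atom n := by
    rintro (_ | _ | _ | _) <;> simp
  cases j
  · have hbox : ∀ χ : PF OC, (match χ with | .box (some (.inl _)) _ => true | _ => false) = true ↔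
        ∃ ψ, .box (op true) ψ = χ := by
      rintro (_ | _ | _ | ⟨_ | ⟨⟨⟩⟩ | ⟨⟨⟩⟩, _⟩) <;> simp [op]
    simp [theta, Theta2P, hatom, hbox]
  · have hbox : ∀ χ : PF OC, (match χ with | .box (some (.inr _)) _ => true | _ => false) = true ↔
        ∃ ψ, .box (op false) ψ = χ := by
      rintro (_ | _ | _ | ⟨_ | ⟨⟨⟩⟩ | ⟨⟨⟩⟩, _⟩) <;> simp [op]
    simp [theta, Theta1P, hatom, hbox]

lemma theta_subset_sub : theta j φ ⊆ φ.sub := fun _ hχ => by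
  rcases mem_theta.1 hχ with hχ | ⟨ψ, hψ, hχ⟩
  exacts [hχ.1, PF.sub_subset_of_mem_sub hψ hχ]

lemma isSubClosed_theta : IsSubClosed (theta j φ) := by
  intro χ hχ θ hθ
  rcases mem_theta.1 hχ with ⟨hχ, n, rfl⟩ | ⟨ψ, hψ, hχ⟩
  · rw [PF.sub, Finset.mem_singleton] at hθ
    exact mem_theta.2 (.inl ⟨hθ ▸ hχ, n, hθ⟩)
  · exact mem_theta.2 (.inr ⟨ψ, hψ, PF.sub_subset_of_mem_sub hχ hθ⟩)

lemma theta_subset_theta {ψ : PF OC} (h : χ ∈ ψ.sub) : theta j χ ⊆ theta j ψ := by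
  have hsub := PF.sub_subset_of_mem_sub h
  intro θ hθ
  rcases mem_theta.1 hθ with ⟨hθ, n, rfl⟩ | ⟨ξ, hξ, hθ⟩
  exacts [mem_theta.2 (.inl ⟨hsub hθ, n, rfl⟩), mem_theta.2 (.inr ⟨ξ, hsub hξ, hθ⟩)]

lemma isSatRel_surrogate {F : KFrame OU} (V : ℕ → F.W → Prop) :
    IsSatRel none (F.R none) fun χ => PVal (F := F) V (surrogate j s χ) :=
  (IsSatRel.pVal V none).comp _ (surrogate_neg j s) (surrogate_and j s) (surrogate_box_none j s)

end Components

section BoxIE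

variable {F : KFrame OU} {V : ℕ → F.W → Prop} {χ : PF OU} {m n : ℕ} {w v : F.W}

lemma pVal_boxIELe_iff : PVal V (boxIELe n χ) w ↔ ∀ m ≤ n, PVal V (boxIE m χ) w := by
  induction n with
  | zero => simp [boxIELe, boxIE]
  | succ n ih => simp only [boxIELe, PVal, ih, Nat.le_succ_iff, or_imp, forall_and, forall_eq]

lemma pVal_boxIELe_of_le (hmn : m ≤ n) (h : PVal V (boxIELe n χ) w) : PVal V (boxIELe m χ) w :=
  pVal_boxIELe_iff.2 fun k hk => pVal_boxIELe_iff.1 h k (hk.trans hmn)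

lemma pVal_boxIELe_of_rel_some (hE : Equivalence (F.R none)) (h : PVal V (boxIELe (n + 1) χ) w)
    (hwv : F.R (some ()) w v) : PVal V (boxIELe n χ) v :=
  pVal_boxIELe_iff.2 fun m hm =>
    pVal_boxIELe_iff.1 h (m + 1) (Nat.succ_le_succ hm) w (hE.refl w) v hwv v (hE.refl v)

lemma pVal_boxIELe_of_rel_none (hE : Equivalence (F.R none))
    (hχ : PVal V χ w → PVal V χ v) (h : PVal V (boxIELe n χ) w)
    (hwv : F.R none w v) : PVal V (boxIELe n χ) v := by
  rw [pVal_boxIELe_iff] at h ⊢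
  rintro (_ | m) hm
  · exact hχ (h 0 hm)
  · exact fun u hu => h (m + 1) hm u (hE.trans hwv hu)

end BoxIE

section Restoration

variable {j : Bool} {s : PF OC → ℕ} {χ : PF OC}

/-- The operation `·⁻ʲ`: it reads a formula of component `j` in the combined language and replaces
the surrogate letter `s θ` by `θ`. -/
noncomputable def restore (j : Bool) (s : PF OC → ℕ) (χ : PF OU) : PF OC :=
  (χ.mapOp (embed j)).substP (Function.extend s id .atom)

lemma restore_surrogate (hs : Function.Injective s) (hχ : ∀ θ, s θ ∉ χ.atoms) :
    restore j s (surrogate j s χ) = χ := by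
  induction χ with
  | atom n =>
    have hn : ¬∃ θ, s θ = n := by simpa [PF.atoms] using hχ
    simp [restore, PF.mapOp, PF.substP, Function.extend_apply' _ _ _ hn]
  | neg χ ih =>
    rw [surrogate_neg]
    exact congrArg PF.neg (ih hχ)
  | and χ ψ ihχ ihψ =>
    simp only [PF.atoms, Finset.mem_union, not_or] at hχ
    rw [surrogate_and]
    exact congrArg₂ PF.and (ihχ fun θ => (hχ θ).1) (ihψ fun θ => (hχ θ).2)
  | box m χ ih =>
    have hbox : ∀ m', restore j s (.box m' (surrogate j s χ)) = .box (embed j m') χ :=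
      fun m' => congrArg (PF.box _) (ih hχ)
    rcases op_cases j m with rfl | rfl | rfl
    · rw [surrogate_box_none, hbox, embed_none]
    · rw [surrogate_box_op, hbox, embed_some]
    · rw [surrogate_box_op_not]
      exact hs.extend_apply _ _ _

variable {L : Set (PF OC)} {Lj : Set (PF OU)} {Φ : Finset (PF OC)}

lemma restore_mem (hL : IsPLogic L) (hLj : PF.mapOp (embed j) '' Lj ⊆ L) (s : PF OC → ℕ)
    {χ : PF OU} (hχ : χ ∈ Lj) : restore j s χ ∈ L :=
  hL.subst _ _ (hLj ⟨χ, hχ, rfl⟩)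

lemma restore_boxIE_mem (hL : IsPLogic L) {χ : PF OU} (hχ : restore j s χ ∈ L) (n : ℕ) :
    restore j s (boxIE n χ) ∈ L := by
  induction n with
  | zero => exact hχ
  | succ n ih => exact hL.nec _ _ (hL.nec _ _ (hL.nec _ _ ih))

lemma restore_boxIELe_mem (hL : IsPLogic L) {χ : PF OU} (hχ : restore j s χ ∈ L) (n : ℕ) :
    restore j s (boxIELe n χ) ∈ L := by
  induction n with
  | zero => exact hχ
  | succ n ih =>
    exact hL.isTheory.mem_of_taut₂ hL ih (restore_boxIE_mem hL hχ (n + 1)) fun _ h h' => ⟨h, h'⟩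

lemma isSatRel_restore_surrogate (hL : IsPLogic L) (j : Bool) (s : PF OC → ℕ) :
    IsSatRel none (fun T U : {T // IsMCS L T} => canonicalRel none T.1 U.1)
      fun χ T => restore j s (surrogate j s χ) ∈ T.1 :=
  (IsSatRel.canonical hL none).comp (fun χ => restore j s (surrogate j s χ))
    (fun χ => by rw [surrogate_neg]; rfl) (fun χ ψ => by rw [surrogate_and]; rfl)
    (fun χ => by rw [surrogate_box_none, restore, PF.mapOp, embed_none]; rfl)

-- Restoration may not undo the surrogates of the formulas `q̂` and `Q̂` themselves, since empty
-- conjunctions contain the letter `0`, which need not be fresh; hence the detour through types.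
lemma worldQuasistate_restore_surrogate (hL : IsPLogic L) (hs : Function.Injective s)
    (hfresh : ∀ χ ∈ Φ, ∀ θ, s θ ∉ χ.atoms) :
    worldQuasistate Φ (fun T U : {T // IsMCS L T} => canonicalRel none T.1 U.1)
        (fun χ T => restore j s (surrogate j s χ) ∈ T.1) =
      worldQuasistate Φ (fun T U => canonicalRel none T.1 U.1) fun χ T => χ ∈ T.1 :=
  (isSatRel_restore_surrogate hL j s).worldQuasistate_congr (.canonical hL none)
    fun χ hχ T => by rw [restore_surrogate hs (hfresh χ hχ)]

lemma isTypeP_of_mem_realisableQuasistates {M : Type} [DecidableEq M] {L : Set (PF M)} {e : M}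
    {Φ : Finset (PF M)} : ∀ q ∈ realisableQuasistates e L Φ, ∀ t ∈ q, IsTypeP Φ t :=
  fun _ hq => (mem_realisableQuasistates.1 hq).1.2.1

lemma restore_surrogate_QhatP_mem (hL : IsPLogic L) (hS : ContainsS5 L none)
    (hs : Function.Injective s) (hΦ : IsSubClosed Φ) (hfresh : ∀ χ ∈ Φ, ∀ θ, s θ ∉ χ.atoms) :
    restore j s (surrogate j s (QhatP none (realisableQuasistates none L Φ))) ∈ L := by
  refine hL.mem_iff_forall_isMCS.2 fun T hT => ?_
  have hcan := IsSatRel.canonical hL none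
  have hq := hcan.isQuasistateP_worldQuasistate (hS.equivalence_canonicalRel hL) hΦ ⟨T, hT⟩
  refine ((isSatRel_restore_surrogate hL j s).QhatP_iff (w := ⟨T, hT⟩)
    isTypeP_of_mem_realisableQuasistates).2 ?_
  rw [worldQuasistate_restore_surrogate hL hs hfresh]
  refine mem_realisableQuasistates.2 ⟨hq, fun hneg => ?_⟩
  exact (hT.neg_mem_iff _).1 (hT.subset hneg) ((hcan.qhatP_iff (w := ⟨T, hT⟩) hq.2.1).2 rfl)

lemma restore_surrogate_neg_qhatP_notMem (hL : IsPLogic L) (hs : Function.Injective s)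
    (hfresh : ∀ χ ∈ Φ, ∀ θ, s θ ∉ χ.atoms) {q : Finset (Finset (PF OC))}
    (hq : q ∈ realisableQuasistates none L Φ) :
    restore j s (surrogate j s (.neg (qhatP none q))) ∉ L := by
  intro hneg
  have htypes := isTypeP_of_mem_realisableQuasistates q hq
  refine (mem_realisableQuasistates.1 hq).2 (hL.mem_iff_forall_isMCS.2 fun T hT => ?_)
  have hcan := IsSatRel.canonical hL none
  have hres := isSatRel_restore_surrogate hL j s
  refine (hcan.neg _ ⟨T, hT⟩).2 fun h => (hres.neg _ ⟨T, hT⟩).1 (hT.subset hneg) ?_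
  rw [hcan.qhatP_iff htypes] at h
  rwa [hres.qhatP_iff htypes, worldQuasistate_restore_surrogate hL hs hfresh]

theorem imp_boxIELe_surrogate_notMem (hL : IsPLogic L) (hS : ContainsS5 L none)
    (hLj : PF.mapOp (embed j) '' Lj ⊆ L) (hs : Function.Injective s) (hΦ : IsSubClosed Φ)
    (hfresh : ∀ χ ∈ Φ, ∀ θ, s θ ∉ χ.atoms) {ψ : PF OC}
    (hψ : restore j s (surrogate j s ψ) ∉ L) (n : ℕ) :
    PF.imp (boxIELe n (surrogate j s (QhatP none (realisableQuasistates none L Φ))))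
      (surrogate j s ψ) ∉ Lj := fun hmem =>
  hψ (hL.isTheory.mp (restore_mem hL hLj s hmem)
    (restore_boxIELe_mem hL (restore_surrogate_QhatP_mem hL hS hs hΦ hfresh) n))

end Restoration

section UniversalModels

variable {M A : Type} {e : M} {L : Set (PF M)} {κ : Cardinal.{0}} {F : KFrame M}

lemma EHomog.mk_eq {V : ℕ → F.W → Prop} (hV : EHomog e V κ) {w : F.W} {p : F.W → Prop} (ψ : PF M)
    (hψ : ∀ v, F.R e w v → (p v ↔ PVal V ψ v)) (hp : ∃ v, F.R e w v ∧ p v) :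
    Cardinal.mk {v // F.R e w v ∧ p v} = κ := by
  obtain ⟨v, hwv, hv⟩ := hp
  have hmk : Cardinal.mk {v // F.R e w v ∧ p v} = Cardinal.mk {v // F.R e w v ∧ PVal V ψ v} :=
    Cardinal.mk_congr (Equiv.subtypeEquivRight fun v => and_congr_right (hψ v))
  exact (hV w ψ).elim
    (fun h => ((Cardinal.mk_eq_zero_iff.1 (hmk.trans h)).false ⟨v, hwv, hv⟩).elim) hmk.trans

/-- A homogeneous model over a frame for `L` whose worlds are coloured, invariantly under all
accessibility relations, such that every non-theorem of `L` is refuted at a world of every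
colour. -/
structure IsUniversalModel (e : M) (L : Set (PF M)) (κ : Cardinal.{0}) (F : KFrame M)
    (V : ℕ → F.W → Prop) (a : F.W → A) : Prop where
  frameFor : FrameFor F L
  homog : EHomog e V κ
  color_eq : ∀ {m x y}, F.R m x y → a x = a y
  exists_refuting : ∀ ψ ∉ L, ∀ α, ∃ w, a w = α ∧ ¬ PVal V ψ w

theorem exists_isUniversalModel [Nonempty A] {ψ₀ : PF M} (hψ₀ : ψ₀ ∉ L)
    (hH : ∀ φ ∉ L, ∃ F : KFrame M, FrameFor F L ∧ ∃ V : ℕ → F.W → Prop,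
      EHomog e V κ ∧ ∃ w, ¬ PVal (F := F) V φ w) :
    ∃ (F : KFrame M) (V : ℕ → F.W → Prop) (a : F.W → A), IsUniversalModel e L κ F V a := by
  choose F hF V hV w hw using fun φ : {φ // φ ∉ L} => hH φ.1 φ.2
  have : Nonempty {φ // φ ∉ L} := ⟨⟨ψ₀, hψ₀⟩⟩
  let G : {φ // φ ∉ L} × A → KFrame M := fun i => F i.1
  let U : ℕ → (KFrame.sigma G).W → Prop := fun n x => V x.1.1 n x.2
  have hG := isBoundedMorphism_sigmaMk G
  refine ⟨KFrame.sigma G, U, fun x => x.1.2, ?_, ?_, ?_, fun ψ hψ α => ?_⟩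
  · exact FrameFor.of_cover fun x => ⟨G x.1, _, x.2, hF x.1.1, hG x.1, rfl⟩
  · rintro ⟨i, x⟩ χ
    rw [(hG i).mk_sat_eq (sigma_mk_injective (β := fun i => (G i).W) (i := i)) e U χ x]
    exact hV i.1 x χ
  · rintro m x _ ⟨z, -, rfl⟩
    rfl
  · exact ⟨⟨(⟨ψ, hψ⟩, α), w ⟨ψ, hψ⟩⟩, rfl,
      fun h => hw ⟨ψ, hψ⟩ (((hG (⟨ψ, hψ⟩, α)).pVal_comp U ψ _).2 h)⟩

end UniversalModels

section Labels

/-- The information shared by the two components about an `E`-class: the quasistate realised in it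
and, for each component, the number of alternations of `□_E` and `□ⱼ` along which all worlds are
known to realise admissible quasistates. Unlabelled classes carry no information. -/
abbrev Label : Type := Option (Finset (Finset (PF OC)) × (Bool → ℕ))

/-- The labels mentioning only quasistates in `Q`. -/
def labelsOver (Q : Finset (Finset (Finset (PF OC)))) : Set Label := {l | ∀ p ∈ l, p.1 ∈ Q}

/-- The types realised in an `E`-class with a given label, where the worlds of unlabelled classes
get the empty type. -/
def Label.types : Label → Finset (Finset (PF OC))
  | none => {∅}
  | some (q, _) => q

/-- The label guarantees at least `n j` further steps in each component `j`. -/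
def Label.Covers (n : Bool → ℕ) (l : Label) : Prop := ∃ p ∈ l, n ≤ p.2

open Classical in
/-- A model of component `j` prepared for gluing: its labels are constant on `E`-classes and
determine how many worlds of each type an `E`-class contains, its types record the truth of the
surrogates of `Φ`, and moving along `□ⱼ` costs one step of component `j`. -/
structure IsLabelledModel (j : Bool) (s : PF OC → ℕ) (Φ : Finset (PF OC))
    (Q : Finset (Finset (Finset (PF OC)))) (Lj : Set (PF OU)) (κ : Cardinal.{0}) (F : KFrame OU)
    (V : ℕ → F.W → Prop) (label : F.W → Label) (type : F.W → Finset (PF OC)) : Prop where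
  frameFor : FrameFor F Lj
  equivalence : Equivalence (F.R none)
  label_eq : ∀ {w v}, F.R none w v → label w = label v
  mk_type_eq : ∀ w t, Cardinal.mk {v // F.R none w v ∧ type v = t} =
    if t ∈ (label w).types then κ else 0
  range_label : Set.range label = labelsOver Q
  mem_type_iff : ∀ {w}, label w ≠ none → ∀ χ ∈ Φ, χ ∈ type w ↔ PVal V (surrogate j s χ) w
  covers_of_rel : ∀ {n w v}, (label w).Covers (n + Pi.single j 1) → F.R (some ()) w v →
    (label v).Covers n
  exists_refuting : ∀ ψ (n : Bool → ℕ),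
    PF.imp (boxIELe (n j) (surrogate j s (QhatP none Q))) ψ ∉ Lj →
      ∃ w, (label w).Covers n ∧ ¬ PVal V ψ w

variable (j : Bool) (s : PF OC → ℕ) (Φ : Finset (PF OC)) (Q : Finset (Finset (Finset (PF OC))))
  {F : KFrame OU} (V : ℕ → F.W → Prop) (a : F.W → Option (Bool → ℕ))

/-- The quasistate of a world of component `j`, with truth given by surrogates. -/
noncomputable def surrogateQuasistate : F.W → Finset (Finset (PF OC)) :=
  worldQuasistate Φ (F.R none) fun χ => PVal V (surrogate j s χ)

/-- All worlds reachable within `k` alternations of `□_E` and `□ⱼ` realise a quasistate of `Q`. -/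
def RealisesWithin (w : F.W) (k : ℕ) : Prop :=
  PVal V (boxIELe k (surrogate j s (QhatP none Q))) w

open Classical in
/-- The label of a world with colour `a w`: the colour states the intended numbers of steps, and
the number for component `j` is lowered to the steps that are actually available. -/
noncomputable def worldLabel (w : F.W) : Label :=
  (a w).bind fun n =>
    if surrogateQuasistate j s Φ V w ∈ Q then
      some (surrogateQuasistate j s Φ V w,
        Function.update n j (Nat.findGreatest (RealisesWithin j s Q V w) (n j)))
    else none

open Classical in
/-- The type of a world, made empty on unlabelled worlds. -/
noncomputable def labelledType (w : F.W) : Finset (PF OC) :=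
  if worldLabel j s Φ Q V a w = none then ∅ else worldType Φ (fun χ => PVal V (surrogate j s χ)) w

variable {j s Φ Q V a}

lemma realisesWithin_zero_iff (hQ : ∀ q ∈ Q, ∀ t ∈ q, IsTypeP Φ t) {w : F.W} :
    RealisesWithin j s Q V w 0 ↔ surrogateQuasistate j s Φ V w ∈ Q :=
  (isSatRel_surrogate s V).QhatP_iff hQ

lemma RealisesWithin.surrogateQuasistate_mem {w : F.W} {k : ℕ}
    (h : RealisesWithin j s Q V w k) (hQ : ∀ q ∈ Q, ∀ t ∈ q, IsTypeP Φ t) :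
    surrogateQuasistate j s Φ V w ∈ Q :=
  (realisesWithin_zero_iff hQ).1 (pVal_boxIELe_of_le k.zero_le h)

open Classical in
lemma worldLabel_eq_some_iff {w : F.W} {q : Finset (Finset (PF OC))} {k : Bool → ℕ} :
    worldLabel j s Φ Q V a w = some (q, k) ↔ ∃ n, a w = some n ∧ q ∈ Q ∧
      surrogateQuasistate j s Φ V w = q ∧
      Function.update n j (Nat.findGreatest (RealisesWithin j s Q V w) (n j)) = k := by
  simp only [worldLabel, Option.bind_eq_some_iff, Option.ite_none_right_eq_some,
    Option.some.injEq, Prod.mk.injEq]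
  exact exists_congr fun n => and_congr_right fun _ =>
    ⟨fun ⟨hq, heq, hk⟩ => ⟨heq ▸ hq, heq, hk⟩, fun ⟨hq, heq, hk⟩ => ⟨heq ▸ hq, heq, hk⟩⟩

lemma worldLabel_eq_of_realisesWithin (hQ : ∀ q ∈ Q, ∀ t ∈ q, IsTypeP Φ t) {w : F.W}
    {n : Bool → ℕ} (hn : a w = some n) (h : RealisesWithin j s Q V w (n j)) :
    worldLabel j s Φ Q V a w = some (surrogateQuasistate j s Φ V w, n) := by
  classical
  refine worldLabel_eq_some_iff.2 ⟨n, hn, h.surrogateQuasistate_mem hQ, rfl, ?_⟩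
  rw [Function.update_eq_self_iff]
  exact (Nat.findGreatest_le _).antisymm (Nat.le_findGreatest le_rfl h)

lemma worldLabel_mem_labelsOver (w : F.W) : worldLabel j s Φ Q V a w ∈ labelsOver Q := by
  rintro ⟨q, k⟩ h
  obtain ⟨n, -, hq, -⟩ := worldLabel_eq_some_iff.1 h
  exact hq

lemma realisesWithin_of_rel (hQ : ∀ q ∈ Q, ∀ t ∈ q, IsTypeP Φ t) (hE : Equivalence (F.R none))
    {w v : F.W} (hwv : F.R none w v) {k : ℕ} (h : RealisesWithin j s Q V w k) :
    RealisesWithin j s Q V v k := by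
  refine pVal_boxIELe_of_rel_none hE (fun h => ?_) h hwv
  rw [(isSatRel_surrogate s V).QhatP_iff hQ] at h ⊢
  rwa [← worldQuasistate_eq_of_rel hE hwv]

lemma worldLabel_eq_of_rel (hQ : ∀ q ∈ Q, ∀ t ∈ q, IsTypeP Φ t) (hE : Equivalence (F.R none))
    (ha : ∀ {m w v}, F.R m w v → a w = a v) {w v : F.W} (hwv : F.R none w v) :
    worldLabel j s Φ Q V a w = worldLabel j s Φ Q V a v := by
  have hP : RealisesWithin j s Q V w = RealisesWithin j s Q V v := funext fun k => propext
    ⟨realisesWithin_of_rel hQ hE hwv, realisesWithin_of_rel hQ hE (hE.symm hwv)⟩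
  have hq : surrogateQuasistate j s Φ V w = surrogateQuasistate j s Φ V v :=
    worldQuasistate_eq_of_rel hE hwv
  simp only [worldLabel]
  rw [ha hwv, hq, hP]

lemma worldLabel_covers_of_rel (hQ : ∀ q ∈ Q, ∀ t ∈ q, IsTypeP Φ t) (hE : Equivalence (F.R none))
    (ha : ∀ {m w v}, F.R m w v → a w = a v) {n : Bool → ℕ} {w v : F.W}
    (hw : (worldLabel j s Φ Q V a w).Covers (n + Pi.single j 1)) (hwv : F.R (some ()) w v) :
    (worldLabel j s Φ Q V a v).Covers n := by
  classical
  obtain ⟨⟨q, k⟩, hlabel, hn⟩ := hw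
  obtain ⟨m, hm, hq, hqw, rfl⟩ := worldLabel_eq_some_iff.1 hlabel
  obtain ⟨hj, hne⟩ := le_update_iff.1 hn
  rw [Pi.add_apply, Pi.single_eq_same] at hj
  have hw : RealisesWithin j s Q V w (n j + 1) := pVal_boxIELe_of_le hj <|
    Nat.findGreatest_spec (P := RealisesWithin j s Q V w) (Nat.zero_le _)
      ((realisesWithin_zero_iff hQ).2 (hqw ▸ hq))
  have hv : RealisesWithin j s Q V v (n j) := pVal_boxIELe_of_rel_some hE hw hwv
  refine ⟨_, worldLabel_eq_some_iff.2
    ⟨m, ha hwv ▸ hm, hv.surrogateQuasistate_mem hQ, rfl, rfl⟩, le_update_iff.2 ⟨?_, ?_⟩⟩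
  · exact Nat.le_findGreatest ((Nat.le_succ _).trans (hj.trans (Nat.findGreatest_le _))) hv
  · exact fun i hi => (le_add_of_nonneg_right (Nat.zero_le _)).trans (hne i hi)

lemma mk_labelledType_eq {κ : Cardinal.{0}} (hQ : ∀ q ∈ Q, ∀ t ∈ q, IsTypeP Φ t)
    (hE : Equivalence (F.R none)) (ha : ∀ {m w v}, F.R m w v → a w = a v)
    (hV : EHomog none V κ) (w : F.W) (t : Finset (PF OC))
    [Decidable (t ∈ (worldLabel j s Φ Q V a w).types)] :
    Cardinal.mk {v // F.R none w v ∧ labelledType j s Φ Q V a v = t} =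
      if t ∈ (worldLabel j s Φ Q V a w).types then κ else 0 := by
  have hlabel : ∀ v, F.R none w v → worldLabel j s Φ Q V a v = worldLabel j s Φ Q V a w :=
    fun v hv => (worldLabel_eq_of_rel hQ hE ha hv).symm
  suffices h : ((∃ v, F.R none w v ∧ labelledType j s Φ Q V a v = t) ↔
      t ∈ (worldLabel j s Φ Q V a w).types) ∧ (t ∈ (worldLabel j s Φ Q V a w).types →
        ∃ ψ, ∀ v, F.R none w v → (labelledType j s Φ Q V a v = t ↔ PVal V ψ v)) by
    obtain ⟨hex, hdef⟩ := h
    split_ifs with ht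
    · obtain ⟨ψ, hψ⟩ := hdef ht
      exact hV.mk_eq ψ hψ (hex.2 ht)
    · exact Cardinal.mk_eq_zero_iff.2 ⟨fun v => ht (hex.1 ⟨v.1, v.2⟩)⟩
  rcases hw : worldLabel j s Φ Q V a w with _ | ⟨q, k⟩
  · have htype : ∀ v, F.R none w v → labelledType j s Φ Q V a v = ∅ :=
      fun v hv => if_pos ((hlabel v hv).trans hw)
    simp only [Label.types, Finset.mem_singleton]
    refine ⟨⟨fun ⟨v, hv, h⟩ => h ▸ htype v hv, fun h => ⟨w, hE.refl w, h ▸ htype w (hE.refl w)⟩⟩,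
      fun h => ⟨PF.imp (.atom 0) (.atom 0), fun v hv => ?_⟩⟩
    simp [h, htype v hv, pVal_imp]
  · have htype : ∀ v, F.R none w v → labelledType j s Φ Q V a v =
        worldType Φ (fun χ => PVal V (surrogate j s χ)) v :=
      fun v hv => if_neg (by simp [hlabel v hv, hw])
    obtain ⟨n, -, hq, rfl, -⟩ := worldLabel_eq_some_iff.1 hw
    have hH := isSatRel_surrogate (j := j) s V
    refine ⟨?_, fun ht => ⟨surrogate j s (typeConjP t), fun v hv => ?_⟩⟩
    · simp only [Label.types, surrogateQuasistate, mem_worldQuasistate]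
      exact exists_congr fun v => and_congr_right fun hv => by rw [htype v hv]
    · rw [htype v hv, hH.worldType_eq_iff (hQ _ hq t ht), hH.typeConjP]

theorem IsUniversalModel.isLabelledModel {Lj : Set (PF OU)} {κ : Cardinal.{0}}
    (hU : IsUniversalModel none Lj κ F V a) (hS : ContainsS5 Lj none)
    (hQ : ∀ q ∈ Q, ∀ t ∈ q, IsTypeP Φ t) {ψ₀ : PF OU} (hψ₀ : ψ₀ ∉ Lj)
    (hcons : ∀ q ∈ Q, ∀ n, PF.imp (boxIELe n (surrogate j s (QhatP none Q)))
      (surrogate j s (.neg (qhatP none q))) ∉ Lj) :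
    IsLabelledModel j s Φ Q Lj κ F V (worldLabel j s Φ Q V a) (labelledType j s Φ Q V a) := by
  have hE := hU.frameFor.equivalence hS
  have hrefute : ∀ ψ (n : Bool → ℕ),
      PF.imp (boxIELe (n j) (surrogate j s (QhatP none Q))) ψ ∉ Lj →
        ∃ w, worldLabel j s Φ Q V a w = some (surrogateQuasistate j s Φ V w, n) ∧
          ¬ PVal V ψ w := by
    intro ψ n hψ
    obtain ⟨w, hw, hwψ⟩ := hU.exists_refuting _ hψ (some n)
    rw [pVal_imp, Classical.not_imp] at hwψ
    exact ⟨w, worldLabel_eq_of_realisesWithin hQ hw hwψ.1, hwψ.2⟩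
  refine ⟨hU.frameFor, hE, worldLabel_eq_of_rel hQ hE hU.color_eq,
    fun w t => mk_labelledType_eq hQ hE hU.color_eq hU.homog w t, ?_, fun hw χ hχ => ?_,
    worldLabel_covers_of_rel hQ hE hU.color_eq, fun ψ n hψ => ?_⟩
  · refine Set.Subset.antisymm (Set.range_subset_iff.2 worldLabel_mem_labelsOver) ?_
    rintro (_ | ⟨q, k⟩) hl
    · obtain ⟨w, hw, -⟩ := hU.exists_refuting _ hψ₀ none
      exact ⟨w, by simp [worldLabel, hw]⟩
    · have hq : q ∈ Q := hl _ rfl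
      obtain ⟨w, hw, hwq⟩ := hrefute _ k (hcons q hq (k j))
      rw [surrogate_neg, PVal, not_not, (isSatRel_surrogate s V).qhatP_iff (hQ q hq)] at hwq
      exact ⟨w, by rw [hw, surrogateQuasistate, hwq]⟩
  · rw [labelledType, if_neg hw, mem_worldType_of_mem hχ]
  · obtain ⟨w, hw, hwψ⟩ := hrefute ψ n hψ
    exact ⟨w, ⟨_, hw, le_rfl⟩, hwψ⟩

end Labels

section Amalgamation

universe u

variable {α β : Type u}

lemma exists_equiv_of_mk_fiber_eq {γ : Type*} {f : α → γ} {g : β → γ}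
    (h : ∀ c, Cardinal.mk {a // f a = c} = Cardinal.mk {b // g b = c}) :
    ∃ e : α ≃ β, ∀ a, g (e a) = f a :=
  ⟨Equiv.ofFiberEquiv fun c => (Cardinal.eq.1 (h c)).some, Equiv.ofFiberEquiv_map _⟩

lemma mk_fiber_fst_eq {γ : Type*} {I : Type u} (hI : Cardinal.aleph0 ≤ Cardinal.mk I)
    (hα : Cardinal.mk α ≤ Cardinal.mk I) {f : α → γ} {c : γ} (hc : c ∈ Set.range f) :
    Cardinal.mk {x : α × I // f x.1 = c} = Cardinal.mk I := by
  obtain ⟨a, ha⟩ := hc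
  rw [Cardinal.mk_congr (Equiv.prodSubtypeFstEquivSubtypeProd (p := fun a => f a = c)),
    Cardinal.mk_prod, Cardinal.lift_id, Cardinal.lift_id]
  exact Cardinal.mul_eq_right hI ((Cardinal.mk_subtype_le _).trans hα)
    (Cardinal.mk_ne_zero_iff.2 ⟨⟨a, ha⟩⟩)

lemma exists_equiv_prod_of_range_eq {γ : Type*} {I : Type u}
    (hI : Cardinal.aleph0 ≤ Cardinal.mk I) (hα : Cardinal.mk α ≤ Cardinal.mk I)
    (hβ : Cardinal.mk β ≤ Cardinal.mk I) {f : α → γ} {g : β → γ}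
    (hfg : Set.range f = Set.range g) :
    ∃ e : α × I ≃ β × I, ∀ x, g (e x).1 = f x.1 := by
  refine exists_equiv_of_mk_fiber_eq (f := fun x : α × I => f x.1) (g := fun x : β × I => g x.1)
    fun c => ?_
  by_cases hc : c ∈ Set.range f
  · rw [mk_fiber_fst_eq hI hα hc, mk_fiber_fst_eq hI hβ (hfg ▸ hc)]
  · have hα : IsEmpty {x : α × I // f x.1 = c} := ⟨fun x => hc ⟨_, x.2⟩⟩
    have hβ : IsEmpty {x : β × I // g x.1 = c} := ⟨fun x => hc (hfg.symm ▸ ⟨_, x.2⟩)⟩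
    rw [Cardinal.mk_eq_zero, Cardinal.mk_eq_zero]

lemma mk_fiber_class_eq {T : Type*} {I : Type u} (E : Setoid α) (t : α → T) (w : α) (i : I)
    (c : T) :
    Cardinal.mk {x : α × I // ((Quotient.mk E x.1, x.2), t x.1) = ((Quotient.mk E w, i), c)} =
      Cardinal.mk {v // E w v ∧ t v = c} := by
  have hiff : ∀ x : α × I, ((Quotient.mk E x.1, x.2), t x.1) = ((Quotient.mk E w, i), c) ↔
      (E w x.1 ∧ t x.1 = c) ∧ x.2 = i := fun x => by
    rw [Prod.mk.injEq, Prod.mk.injEq, Quotient.eq, Setoid.comm', and_right_comm]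
  exact Cardinal.mk_congr <| (Equiv.subtypeEquivRight hiff).trans <|
    (Equiv.subtypeProdEquivProd (p := fun v => E w v ∧ t v = c) (q := fun k => k = i)).trans
      (Equiv.prodUnique _ _)

-- Enough copies of both sides make the numbers of `E`-classes with each label agree; equally
-- labelled classes are then matched world by world within each type.
theorem exists_equiv_prod_of_labels {Λ T : Type*} (E₁ : Setoid α) (E₂ : Setoid β) {l₁ : α → Λ}
    {l₂ : β → Λ} {t₁ : α → T} {t₂ : β → T} (hl₁ : ∀ x y, E₁ x y → l₁ x = l₁ y)
    (hl₂ : ∀ x y, E₂ x y → l₂ x = l₂ y) (hrange : Set.range l₁ = Set.range l₂)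
    (hmk : ∀ x y, l₁ x = l₂ y → ∀ t, Cardinal.mk {v // E₁ x v ∧ t₁ v = t} =
      Cardinal.mk {v // E₂ y v ∧ t₂ v = t}) :
    ∃ (I : Type u) (_ : Nonempty I) (e : α × I ≃ β × I),
      (∀ x y, E₁ x.1 y.1 ∧ x.2 = y.2 ↔ E₂ (e x).1 (e y).1 ∧ (e x).2 = (e y).2) ∧
        ∀ x, l₂ (e x).1 = l₁ x.1 ∧ t₂ (e x).1 = t₁ x.1 := by
  let I : Type u := (α ⊕ β) ⊕ ULift.{u} ℕ
  have hI : Cardinal.aleph0 ≤ Cardinal.mk I := Cardinal.infinite_iff.1 inferInstance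
  have hα : Cardinal.mk (Quotient E₁) ≤ Cardinal.mk I := Cardinal.mk_quotient_le.trans
    (Cardinal.mk_le_of_injective (Sum.inl_injective.comp Sum.inl_injective))
  have hβ : Cardinal.mk (Quotient E₂) ≤ Cardinal.mk I := Cardinal.mk_quotient_le.trans
    (Cardinal.mk_le_of_injective (Sum.inl_injective.comp Sum.inr_injective))
  obtain ⟨eQ, heQ⟩ := exists_equiv_prod_of_range_eq hI hα hβ
    (f := Quotient.lift l₁ hl₁) (g := Quotient.lift l₂ hl₂) (by
      rw [Set.range_quotient_lift, Set.range_quotient_lift, hrange])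
  have hfiber : ∀ c, Cardinal.mk {x : α × I // (eQ (Quotient.mk E₁ x.1, x.2), t₁ x.1) = c} =
      Cardinal.mk {y : β × I // ((Quotient.mk E₂ y.1, y.2), t₂ y.1) = c} := by
    rintro ⟨c, t⟩
    obtain ⟨⟨c, i⟩, rfl⟩ := eQ.surjective c
    obtain ⟨x, rfl⟩ := Quotient.mk_surjective c
    obtain ⟨⟨y, k⟩, hy⟩ : ∃ y : β × I, (Quotient.mk E₂ y.1, y.2) = eQ (Quotient.mk E₁ x, i) :=
      (Quotient.mk_surjective.prodMap Function.surjective_id) _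
    have hxy : l₁ x = l₂ y :=
      (heQ (Quotient.mk E₁ x, i)).symm.trans (congrArg (fun c => Quotient.lift l₂ hl₂ c.1) hy.symm)
    calc
      _ = Cardinal.mk {v // E₁ x v ∧ t₁ v = t} := by
        rw [← mk_fiber_class_eq E₁ t₁ x i]
        exact Cardinal.mk_congr (Equiv.subtypeEquivRight fun x' => by
          rw [Prod.mk.injEq, eQ.injective.eq_iff, ← Prod.mk.injEq])
      _ = _ := by rw [hmk x y hxy, ← mk_fiber_class_eq E₂ t₂ y k, ← hy]
  obtain ⟨e, he⟩ := exists_equiv_of_mk_fiber_eq hfiber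
  have heE : ∀ x, (Quotient.mk E₂ (e x).1, (e x).2) = eQ (Quotient.mk E₁ x.1, x.2) :=
    fun x => congrArg Prod.fst (he x)
  refine ⟨I, ⟨.inr ⟨0⟩⟩, e, fun x y => ?_, fun x => ⟨?_, congrArg Prod.snd (he x)⟩⟩
  · simp only [← Quotient.eq, ← Prod.mk.injEq, heE, eQ.injective.eq_iff]
  · exact (congrArg (fun c => Quotient.lift l₂ hl₂ c.1) (heE x)).trans (heQ _)

end Amalgamation

section Gluing

variable {F : Bool → KFrame OU} {W I Λ T : Type}

/-- The frame for the combined signature whose operators of component `j` are read off from `F j`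
along the bijection `p j`; the shared `□_E` is read off from component `true`. -/
def gluedFrame (F : Bool → KFrame OU) [Nonempty W] (p : ∀ j, W ≃ (F j).W × I) : KFrame OC where
  W := W
  ne := inferInstance
  R m x y :=
    let R' (j : Bool) (m' : OU) : Prop :=
      (F j).R m' (p j x).1 (p j y).1 ∧ (p j x).2 = (p j y).2
    match m with
    | none => R' true none
    | some (.inl u) => R' true (some u)
    | some (.inr u) => R' false (some u)

lemma isDisjointCopies_gluedFrame [Nonempty W] {p : ∀ j, W ≃ (F j).W × I}
    (hp : ∀ x y, (F true).R none (p true x).1 (p true y).1 ∧ (p true x).2 = (p true y).2 ↔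
      (F false).R none (p false x).1 (p false y).1 ∧ (p false x).2 = (p false y).2) (j : Bool) :
    IsDisjointCopies ((gluedFrame F p).reduct (embed j)) (F j) (p j) := by
  rintro (_ | ⟨⟨⟩⟩) x y <;> cases j
  exacts [hp x y, Iff.rfl, Iff.rfl, Iff.rfl]

/-- `G` is, in each component `j`, a disjoint union of copies of `F j`, and the labels and types of
the two components agree at every world of `G`. -/
structure IsGluing (F : Bool → KFrame OU) (label : ∀ j, (F j).W → Λ) (type : ∀ j, (F j).W → T)
    (G : KFrame OC) (p : ∀ j, G.W ≃ (F j).W × I) : Prop where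
  copies : ∀ j, IsDisjointCopies (G.reduct (embed j)) (F j) (p j)
  label_eq : ∀ j k x, label j (p j x).1 = label k (p k x).1
  type_eq : ∀ j k x, type j (p j x).1 = type k (p k x).1

theorem exists_isGluing {s : PF OC → ℕ} {Φ : Finset (PF OC)}
    {Q : Finset (Finset (Finset (PF OC)))} {L : Bool → Set (PF OU)} {κ : Cardinal.{0}}
    {V : ∀ j, ℕ → (F j).W → Prop} {label : ∀ j, (F j).W → Label}
    {type : ∀ j, (F j).W → Finset (PF OC)}
    (hC : ∀ j, IsLabelledModel j s Φ Q (L j) κ (F j) (V j) (label j) (type j)) :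
    ∃ (I : Type) (_ : Nonempty I) (G : KFrame OC) (p : ∀ j, G.W ≃ (F j).W × I),
      IsGluing F label type G p := by
  obtain ⟨I, hI, e, heE, he⟩ := exists_equiv_prod_of_labels
    ⟨_, (hC true).equivalence⟩ ⟨_, (hC false).equivalence⟩
    (fun _ _ => (hC true).label_eq) (fun _ _ => (hC false).label_eq)
    ((hC true).range_label.trans (hC false).range_label.symm) fun x y hxy t =>
      ((hC true).mk_type_eq x t).trans ((hxy ▸ (hC false).mk_type_eq y t).symm)
  have := (F true).ne
  let p : ∀ j, (F true).W × I ≃ (F j).W × I := Bool.rec e (Equiv.refl _)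
  refine ⟨I, hI, gluedFrame F p, p, isDisjointCopies_gluedFrame heE, ?_, ?_⟩
  · rintro (_ | _) (_ | _) x
    exacts [rfl, (he x).1, (he x).1.symm, rfl]
  · rintro (_ | _) (_ | _) x
    exacts [rfl, (he x).2, (he x).2.symm, rfl]

end Gluing
section Fusion

variable {M₁ M₂ : Type} {L₁ : Set (PF (Option M₁))} {L₂ : Set (PF (Option M₂))}

lemma isPLogic_fusionE : IsPLogic (fusionE L₁ L₂) := IsPLogic.sInter fun _ hL => hL.1

lemma image_inl_subset_fusionE : PF.mapOp (Option.map .inl) '' L₁ ⊆ fusionE L₁ L₂ :=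
  Set.subset_sInter fun _ hL => hL.2.1

lemma image_inr_subset_fusionE : PF.mapOp (Option.map .inr) '' L₂ ⊆ fusionE L₁ L₂ :=
  Set.subset_sInter fun _ hL => hL.2.2

lemma frameFor_fusionE {G : KFrame (Option (M₁ ⊕ M₂))}
    (h₁ : FrameFor (G.reduct (Option.map .inl)) L₁)
    (h₂ : FrameFor (G.reduct (Option.map .inr)) L₂) : FrameFor G (fusionE L₁ L₂) := fun _ hφ =>
  hφ {φ | PValid G φ} ⟨isPLogic_setOf_pValid G,
    Set.image_subset_iff.2 fun χ hχ V w => (pVal_mapOp _ V χ w).2 (h₁ χ hχ V w),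
    Set.image_subset_iff.2 fun χ hχ V w => (pVal_mapOp _ V χ w).2 (h₂ χ hχ V w)⟩

lemma ContainsS5.of_image_mapOp_subset {M M' : Type} {f : M → M'} {L : Set (PF M)}
    {L' : Set (PF M')} {e : M} (hS : ContainsS5 L e) (hL : PF.mapOp f '' L ⊆ L') :
    ContainsS5 L' (f e) :=
  ⟨hL ⟨_, hS.1, rfl⟩, hL ⟨_, hS.2.1, rfl⟩, hL ⟨_, hS.2.2, rfl⟩⟩

end Fusion

section TruthLemma

variable {s : PF OC → ℕ} {Φ : Finset (PF OC)} {Q : Finset (Finset (Finset (PF OC)))}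
  {L : Bool → Set (PF OU)} {κ : Cardinal.{0}} {F : Bool → KFrame OU} {V : ∀ j, ℕ → (F j).W → Prop}
  {label : ∀ j, (F j).W → Label} {type : ∀ j, (F j).W → Finset (PF OC)} {I : Type}
  {G : KFrame OC} {p : ∀ j, G.W ≃ (F j).W × I} {j : Bool} {χ : PF OC} {x y : G.W}

lemma Label.Covers.mono {l : Label} {m n : Bool → ℕ} (h : l.Covers n) (hmn : m ≤ n) :
    l.Covers m :=
  let ⟨a, ha, hn⟩ := h
  ⟨a, ha, hmn.trans hn⟩

lemma Label.Covers.ne_none {l : Label} {n : Bool → ℕ} (h : l.Covers n) : l ≠ none := by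
  rintro rfl
  simp [Label.Covers] at h

namespace IsGluing

lemma pVal_box_iff (hG : IsGluing F label type G p) {U : ℕ → G.W → Prop} {m : OU} {ψ : PF OU}
    (h : ∀ y, G.R (embed j m) x y → (PVal U χ y ↔ PVal (V j) ψ (p j y).1)) :
    PVal U (.box (embed j m) χ) x ↔ PVal (V j) (.box m ψ) (p j x).1 :=
  (forall₂_congr h).trans
    ((hG.copies j).isBoundedMorphism.forall_iff m x fun v => PVal (V j) ψ v).symm

variable (hG : IsGluing F label type G p)
  (hC : ∀ j, IsLabelledModel j s Φ Q (L j) κ (F j) (V j) (label j) (type j))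

include hG hC

lemma label_eq_of_rel (hxy : G.R none x y) : label j (p j x).1 = label j (p j y).1 :=
  (hC j).label_eq ((hG.copies j none x y).1 (by rwa [← embed_none j] at hxy)).1

lemma covers_of_rel {n : Bool → ℕ} (hx : (label j (p j x).1).Covers (n + Pi.single j 1))
    (hxy : G.R (op j) x y) : (label j (p j y).1).Covers n :=
  (hC j).covers_of_rel hx ((hG.copies j (some ()) x y).1 (by rwa [← embed_some j ()] at hxy)).1

lemma surrogate_iff (hx : label j (p j x).1 ≠ none) (hχ : χ ∈ Φ) (k : Bool) :
    PVal (V j) (surrogate j s χ) (p j x).1 ↔ PVal (V k) (surrogate k s χ) (p k x).1 := by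
  rw [← (hC j).mem_type_iff hx χ hχ, ← (hC k).mem_type_iff (hG.label_eq j k x ▸ hx) χ hχ,
    hG.type_eq j k x]

lemma pVal_box_op_iff {U : ℕ → G.W → Prop}
    (h : ∀ y, (label j (p j y).1).Covers (modalDepth χ) →
      (PVal U χ y ↔ PVal (V j) (surrogate j s χ) (p j y).1))
    (hx : (label j (p j x).1).Covers (modalDepth (.box (op j) χ))) :
    PVal U (.box (op j) χ) x ↔ PVal (V j) (surrogate j s (.box (op j) χ)) (p j x).1 := by
  rw [modalDepth_box_op] at hx
  rw [surrogate_box_op, ← embed_some j ()]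
  refine hG.pVal_box_iff fun y hxy => h y (hG.covers_of_rel hC hx ?_)
  rwa [embed_some] at hxy

-- Induction on `χ`, for both components at once: an operator of the other component occurs only
-- inside `Φ`, where types record the truth of surrogates and so allow a change of component.
theorem pVal_iff (hΦ : IsSubClosed Φ) (hχ : theta j χ ⊆ Φ)
    (hx : (label j (p j x).1).Covers (modalDepth χ)) :
    PVal (F := G) (fun n y => V true n (p true y).1) χ x ↔
      PVal (V j) (surrogate j s χ) (p j x).1 := by
  induction χ generalizing j x with
  | atom n =>
    have hn : .atom n ∈ Φ := hχ (mem_theta.2 (.inl ⟨PF.self_mem_sub _, n, rfl⟩))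
    simpa [PVal] using (hG.surrogate_iff hC hx.ne_none hn true).symm
  | neg χ ih =>
    have hsub : χ ∈ (PF.neg χ).sub := by simp [PF.sub, PF.self_mem_sub]
    rw [surrogate_neg, PVal, PVal, ih ((theta_subset_theta hsub).trans hχ)
      (hx.mono (modalDepth_le_of_mem_sub hsub))]
  | and χ ψ ihχ ihψ =>
    have hsubχ : χ ∈ (PF.and χ ψ).sub := by simp [PF.sub, PF.self_mem_sub]
    have hsubψ : ψ ∈ (PF.and χ ψ).sub := by simp [PF.sub, PF.self_mem_sub]
    rw [surrogate_and, PVal, PVal, ihχ ((theta_subset_theta hsubχ).trans hχ)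
      (hx.mono (modalDepth_le_of_mem_sub hsubχ)), ihψ ((theta_subset_theta hsubψ).trans hχ)
      (hx.mono (modalDepth_le_of_mem_sub hsubψ))]
  | box m χ ih =>
    have hsub : χ ∈ (PF.box m χ).sub := by simp [PF.sub, PF.self_mem_sub]
    have hθ := (theta_subset_theta hsub).trans hχ
    rcases op_cases j m with rfl | rfl | rfl
    · rw [surrogate_box_none]
      nth_rw 1 [← embed_none j]
      refine hG.pVal_box_iff fun y hxy => ih hθ ?_
      rw [embed_none] at hxy
      exact hG.label_eq_of_rel hC hxy ▸ hx.mono (modalDepth_le_of_mem_sub hsub)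
    · exact hG.pVal_box_op_iff hC (fun y => ih hθ) hx
    · have hbox : PF.box (op !j) χ ∈ Φ :=
        hχ (mem_theta.2 (.inr ⟨χ, PF.self_mem_sub _, PF.self_mem_sub _⟩))
      rw [hG.surrogate_iff hC hx.ne_none hbox (!j)]
      have hθ' : theta (!j) χ ⊆ Φ :=
        (theta_subset_sub.trans (PF.sub_subset_of_mem_sub hsub)).trans (hΦ _ hbox)
      exact hG.pVal_box_op_iff hC (fun y => ih hθ') (hG.label_eq j (!j) x ▸ hx)

end IsGluing

end TruthLemma

section Criterion

variable {s : PF OC → ℕ} {Φ : Finset (PF OC)} {Q : Finset (Finset (Finset (PF OC)))} {i j : Bool}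

lemma nonempty_of_imp_boxIELe_notMem {Lj : Set (PF OU)} (hH : AdmitsEHomog none Lj)
    (hQ : ∀ q ∈ Q, ∀ t ∈ q, IsTypeP Φ t) {n : ℕ} {ψ : PF OU}
    (hψ : PF.imp (boxIELe n (surrogate j s (QhatP none Q))) ψ ∉ Lj) : Q.Nonempty := by
  obtain ⟨κ, -, hκ⟩ := hH
  obtain ⟨F, -, V, -, w, hw⟩ := hκ κ le_rfl _ hψ
  rw [pVal_imp, Classical.not_imp] at hw
  exact ⟨_, RealisesWithin.surrogateQuasistate_mem hw.1 hQ⟩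

theorem exists_refuting_of_imp_boxIELe_notMem {L : Bool → Set (PF OU)}
    (hS : ∀ j, ContainsS5 (L j) none) (hH : ∀ j, AdmitsEHomog none (L j)) (hΦ : IsSubClosed Φ)
    (hQ : ∀ q ∈ Q, ∀ t ∈ q, IsTypeP Φ t)
    (hcons : ∀ j, ∀ q ∈ Q, ∀ n, PF.imp (boxIELe n (surrogate j s (QhatP none Q)))
      (surrogate j s (.neg (qhatP none q))) ∉ L j)
    {φ : PF OC} (hφΦ : theta i φ ⊆ Φ)
    (hφ : PF.imp (boxIELe (modalDepth φ i) (surrogate i s (QhatP none Q)))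
      (surrogate i s φ) ∉ L i) :
    ∃ G : KFrame OC, FrameFor G (fusionE (L true) (L false)) ∧
      ∃ (V : ℕ → G.W → Prop) (w : G.W), ¬ PVal V φ w := by
  obtain ⟨q, hq⟩ := nonempty_of_imp_boxIELe_notMem (hH i) hQ hφ
  choose κ _ hκ using hH
  have hle : ∀ j, κ j ≤ max (κ true) (κ false) :=
    Bool.forall_bool.2 ⟨le_max_right _ _, le_max_left _ _⟩
  choose F V a hU using fun j => exists_isUniversalModel (A := Option (Bool → ℕ))
    (hcons j q hq 0) (hκ j _ (hle j))
  have hC := fun j => (hU j).isLabelledModel (hS j) hQ (hcons j q hq 0) (hcons j)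
  obtain ⟨I, ⟨c⟩, G, p, hG⟩ := exists_isGluing hC
  have hframe := fun j => (hG.copies j).frameFor (hC j).frameFor
  obtain ⟨w, hw, hwφ⟩ := (hC i).exists_refuting _ _ hφ
  refine ⟨G, frameFor_fusionE (hframe true) (hframe false), _, (p i).symm (w, c),
    (hG.pVal_iff hC hΦ hφΦ (j := i) ?_).not.2 ?_⟩
  · rwa [Equiv.apply_symm_apply]
  · rwa [Equiv.apply_symm_apply]

theorem local_quasistate_criterionP_general (L : Bool → Set (PF OU))
    (hS : ∀ j, ContainsS5 (L j) none) (hH : ∀ j, AdmitsEHomog none (L j)) (i : Bool) (φ : PF OC)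
    (s : PF OC → ℕ) (hs : Function.Injective s) (hfresh : ∀ θ, s θ ∉ φ.atoms) :
    (φ ∉ fusionE (L true) (L false) ↔
      ∃ F : KFrame OC, FrameFor F (fusionE (L true) (L false)) ∧
        ∃ (V : ℕ → F.W → Prop) (w : F.W), ¬ PVal V φ w) ∧
    (φ ∉ fusionE (L true) (L false) ↔
      PF.imp (boxIELe (modalDepth φ i) (surrogate i s (QhatP none
        (realisableQuasistates none (fusionE (L true) (L false)) (theta i φ)))))
        (surrogate i s φ) ∉ L i) := by
  have hLj : ∀ j, PF.mapOp (embed j) '' L j ⊆ fusionE (L true) (L false) :=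
    Bool.forall_bool.2 ⟨image_inr_subset_fusionE, image_inl_subset_fusionE⟩
  have hS' : ContainsS5 (fusionE (L true) (L false)) none :=
    (hS true).of_image_mapOp_subset (hLj true)
  have hfreshΘ : ∀ χ ∈ theta i φ, ∀ θ, s θ ∉ χ.atoms := fun χ hχ θ h =>
    hfresh θ (PF.atoms_subset_of_mem_sub (theta_subset_sub hχ) h)
  have hnotMem := fun j {ψ : PF OC} => imp_boxIELe_surrogate_notMem (ψ := ψ) isPLogic_fusionE hS'
    (hLj j) hs isSubClosed_theta hfreshΘ
  have hcons := fun j q (hq : q ∈ realisableQuasistates none _ _) => hnotMem j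
    (restore_surrogate_neg_qhatP_notMem isPLogic_fusionE hs hfreshΘ hq)
  have hsurrogate (h : φ ∉ fusionE (L true) (L false)) :=
    hnotMem i (by rwa [restore_surrogate hs hfresh]) (modalDepth φ i)
  have hrefuting := exists_refuting_of_imp_boxIELe_notMem hS hH isSubClosed_theta
    isTypeP_of_mem_realisableQuasistates hcons (Finset.Subset.refl (theta i φ))
  have hsound : (∃ F : KFrame OC, FrameFor F (fusionE (L true) (L false)) ∧
      ∃ (V : ℕ → F.W → Prop) (w : F.W), ¬ PVal V φ w) → φ ∉ fusionE (L true) (L false) :=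
    fun ⟨_, hF, V, w, hw⟩ hφ => hw (hF φ hφ V w)
  exact ⟨⟨hrefuting ∘ hsurrogate, hsound⟩,
    ⟨hsurrogate, hsound ∘ hrefuting⟩⟩

end Criterion

/-- The quasistate criterion for derivability in the fusion
`L1 ⊗_E L2` of two bimodal logics sharing the S5 operator `□_E` (designated by
`none`) and admitting `E`-homogeneous models: for each `i ∈ {1,2}` with
`adp(φ) = adpⁱ(φ)`, conditions (i), (ii), (iii) are equivalent. -/
theorem local_quasistate_criterionP (L1 L2 : Set (PF OU))
    (h1 : IsPLogic L1) (h2 : IsPLogic L2)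
    (hS1 : ContainsS5 L1 none) (hS2 : ContainsS5 L2 none)
    (hH1 : AdmitsEHomog none L1) (hH2 : AdmitsEHomog none L2)
    (φ : PF OC) (s : PF OC → ℕ) (hs : Function.Injective s)
    (hfresh : ∀ θ, s θ ∉ φ.atoms) :
    -- case i = 1
    (adpP φ = adp1P φ →
      ((φ ∉ fusionE L1 L2 ↔
          ∃ F : KFrame OC, FrameFor F (fusionE L1 L2) ∧
            ∃ (V : ℕ → F.W → Prop) (w : F.W), ¬ PVal (F := F) V φ w) ∧
       (φ ∉ fusionE L1 L2 ↔
          PF.imp (boxIELe (md1P φ) (sur1P s (QhatP none (Qset1P (fusionE L1 L2) φ))))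
            (sur1P s φ) ∉ L1))) ∧
    -- case i = 2
    (adpP φ = adp2P φ →
      ((φ ∉ fusionE L1 L2 ↔
          ∃ F : KFrame OC, FrameFor F (fusionE L1 L2) ∧
            ∃ (V : ℕ → F.W → Prop) (w : F.W), ¬ PVal (F := F) V φ w) ∧
       (φ ∉ fusionE L1 L2 ↔
          PF.imp (boxIELe (md2P φ) (sur2P s (QhatP none (Qset2P (fusionE L1 L2) φ))))
            (sur2P s φ) ∉ L2))) :=
  have key := local_quasistate_criterionP_general (fun j => cond j L1 L2)
    (Bool.forall_bool.2 ⟨hS2, hS1⟩) (Bool.forall_bool.2 ⟨hH2, hH1⟩)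
  ⟨fun _ => key true φ s hs hfresh, fun _ => key false φ s hs hfresh⟩

end PropML
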